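/- arXiv:1911.08458 — 2 statements merged into one kernel-verified Lean document; each statement's English description precedes it below -/
import Mathlib

section
/- There exists an absolute constant B₀ such that the following holds whenever B ≥ B₀, r is a positive rational, and s is an odd positive integer with s ≥ 10(2r+1)B²: for every θ ∈ 𝓕_B, the limit over positive integers n divisible by P_{B,den(r)} satisfies lim_{n→∞} r_{n,1}/r_{n,θ} = 1, where r_{n,θ} = ∑_{m=1}^{∞} R_n(m+θ). -/
/-!
Put `p = r n` and `M = (2r+1) n = 2p + n`, both integers when `P_{B,den(r)} ∣ n`. Since `𝓕_B` contains
`1` and is stable under `θ ↦ 1 - θ` for `θ ≠ 1`, the numerator of `R_n` vanishes at `m + θ` for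
`1 ≤ m < p`. Substituting `m = p + k` gives (`tsum_Rfun`)
`r_{n,θ} = C_n ∑_{k ≥ 0} G(k + θ)`, where `G = exp ∘ logG` is positive on `(0, ∞)` and `C_n ≠ 0` does
not depend on `θ`. It remains to see that the two sums of `G`, over `ℕ + 1` and `ℕ + θ`, are
asymptotically equal.

This is a Fisher-information argument, so the maximum of `G` need not be located. With
`h = (log G)'`, one has `G'' = (h² + h') G`. Suppose `-h' ≤ η² + e h` on `[θ, ∞)` with a constant
`e ≥ 0`. Then, by `|h| ≤ η/2 + h²/(2η)`,
`|G'| ≤ η G + W'`, where `W = (h + e) G / (2η)`.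
Integrating, `W ≥ 0` at `θ` and `W → 0` at infinity show that the total variation of `G` is at most
`η ∫ G` (up to the discretization handled in `interval_bound`), whence the ratio of the two sums is
within `η/(1-η)` of `1` (`ratio_bound`).

The differential inequality holds for every `η` once `n` is large (`ratio_logG_eventually`):
* `-h'(x) ≤ D/x` with `D` independent of `n` (`neg_logG''_le`);
* `h(x) + C ≥ ∑_{j<n} 1/(x+j+1)` with `C` independent of `n` (`le_logG'_add`); the right side is
  nonnegative, and tends to infinity with `n`, uniformly for `x` in a bounded set.
For large `x` the first bound suffices, and for bounded `x` the second one makes `e h` dominate `D/x`.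

Finally the series must converge, which by comparing degrees requires `(2r+1) |𝓕_B| ≤ s`, that is
`|𝓕_B| ≤ 10 B²`. As `|𝓕_B| ≤ ∑_{b ∈ Ψ} φ(b) ≤ B |Ψ|`, it is enough that `|Ψ| ≤ 10 B`
(`card_totient_le`), which comes from bounding `∑_{b > 5B} φ(b)⁻²`.
-/

open Finset Filter Real

noncomputable section

/-- The zero set `𝓕_B`: rationals `a/b` with `b ∈ Ψ`, `1 ≤ a ≤ b`, `gcd(a,b)=1`. -/
def zeroSet (Psi : Finset ℕ) : Finset ℚ :=
  Psi.biUnion fun b =>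
    ((Finset.Icc 1 b).filter fun a => Nat.Coprime a b).image fun a : ℕ => (a : ℚ) / b

/-- `P_{B,den(r)} = 2·den(r)·LCM{p−1 : p prime, p ∣ b for some b ∈ Ψ}`. -/
def Pconst (Psi : Finset ℕ) (r : ℚ) : ℕ :=
  2 * r.den * (Psi.biUnion Nat.primeFactors).lcm (fun p => p - 1)

/-- The major arithmetic factor `A₁(B) = ∏_{b ∈ Ψ} b^{(2r+1)φ(b)}`. -/
def A1 (Psi : Finset ℕ) (r : ℚ) : ℝ :=
  ∏ b ∈ Psi, (b : ℝ) ^ ((2 * (r : ℝ) + 1) * (Nat.totient b : ℝ))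

/-- The minor arithmetic factor `A₂(B) = ∏_{b ∈ Ψ} ∏_{p ∣ b} p^{(2r+1)φ(b)/(p−1)}`. -/
def A2 (Psi : Finset ℕ) (r : ℚ) : ℝ :=
  ∏ b ∈ Psi, ∏ p ∈ b.primeFactors,
    (p : ℝ) ^ ((2 * (r : ℝ) + 1) * (Nat.totient b : ℝ) / ((p : ℝ) - 1))

/-- The auxiliary rational function
`R_n(t) = A₁ⁿA₂ⁿ · (n!^{s+1}/((n/den(r))!)^{den(r)(2r+1)|𝓕_B|}) · (t−rn)·
∏_{θ∈𝓕_B}∏_{j=0}^{(2r+1)n−1}(t−rn+j+θ) / ∏_{j=0}^{n}(t+j)^{s+1}`.  Here, assuming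
`P_{B,den(r)} ∣ n`, `(2r+1)n = 2·num(r)·(n/den(r)) + n` and `den(r)(2r+1) = 2·num(r)+den(r)`
are the indicated natural numbers (the divisions are exact). -/
def Rfun (Psi : Finset ℕ) (r : ℚ) (s n : ℕ) (t : ℝ) : ℝ :=
  A1 Psi r ^ n * A2 Psi r ^ n *
    ((n.factorial : ℝ) ^ (s + 1) /
      (((n / r.den).factorial : ℝ)) ^ ((2 * r.num.toNat + r.den) * (zeroSet Psi).card)) *
    ((t - (r : ℝ) * n) *
      ∏ θ ∈ zeroSet Psi, ∏ j ∈ Finset.range (2 * (r.num.toNat * (n / r.den)) + n),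
        (t - (r : ℝ) * n + (j : ℝ) + (θ : ℝ))) /
    ∏ j ∈ Finset.range (n + 1), (t + (j : ℝ)) ^ (s + 1)


/-! ### Counting the integers with bounded totient -/

/-- Bound for the Euler product `∏ (1 + f(p)/p)`, `f(p) = p²/(p-1)² - 1`, over any set of primes, by
the product over all integers `m ≥ 2`, which telescopes against `1 - 3/m`. -/
theorem prod_primes_le (X : ℕ) (S : Finset ℕ) (hS : ∀ p ∈ S, p.Prime ∧ p < X) :
    ∏ p ∈ S, (1 + ((p : ℝ) ^ 2 / ((p : ℝ) - 1) ^ 2 - 1) / p) ≤ 11 := by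
  have fac : ∀ m : ℕ, 2 ≤ m → (1 : ℝ) ≤ 1 + ((m : ℝ) ^ 2 / ((m : ℝ) - 1) ^ 2 - 1) / m := by
    intro m hm
    have h2 : (2 : ℝ) ≤ m := by exact_mod_cast hm
    have : 1 ≤ (m : ℝ) ^ 2 / ((m : ℝ) - 1) ^ 2 := by
      rw [one_le_div (by nlinarith)]; nlinarith
    have : 0 ≤ ((m : ℝ) ^ 2 / ((m : ℝ) - 1) ^ 2 - 1) / m := div_nonneg (by linarith) (by linarith)
    linarith
  have tele : ∀ Y : ℕ, 5 ≤ Y → ∏ m ∈ Finset.Ico 2 Y,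
      (1 + ((m : ℝ) ^ 2 / ((m : ℝ) - 1) ^ 2 - 1) / m) ≤ (11 : ℝ) * (1 - 3 / (Y : ℝ)) := by
    intro Y hY
    induction Y, hY using Nat.le_induction with
    | base => norm_num [Finset.prod_Ico_succ_top]
    | succ Y hY ih =>
      rw [Finset.prod_Ico_succ_top (by omega)]
      have h5 : (5 : ℝ) ≤ Y := by exact_mod_cast hY
      refine (mul_le_mul_of_nonneg_right ih (by linarith [fac Y (by omega)])).trans ?_
      have h1 : (0 : ℝ) < Y - 1 := by linarith
      have : 11 * (1 - 3 / ((Y + 1 : ℕ) : ℝ)) -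
          11 * (1 - 3 / (Y : ℝ)) * (1 + ((Y : ℝ) ^ 2 / ((Y : ℝ) - 1) ^ 2 - 1) / Y) =
          11 * (Y ^ 3 - Y ^ 2 + 7 * Y - 3) / (Y ^ 2 * (Y + 1) * (Y - 1) ^ 2) := by
        push_cast
        field_simp
        ring
      have h2 : (0 : ℝ) ≤ 11 * (Y ^ 3 - Y ^ 2 + 7 * Y - 3) / (Y ^ 2 * (Y + 1) * (Y - 1) ^ 2) := by
        refine div_nonneg ?_ (by positivity)
        nlinarith [mul_nonneg (sq_nonneg (Y : ℝ)) h1.le]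
      linarith
  have hsub : S ⊆ Finset.Ico 2 (X + 5) := fun p hp => by
    have := hS p hp
    have := this.1.two_le
    simp; omega
  calc _ ≤ ∏ m ∈ Finset.Ico 2 (X + 5), ((1 : ℝ) + ((m : ℝ) ^ 2 / ((m : ℝ) - 1) ^ 2 - 1) / m) := by
        rw [← Finset.prod_sdiff hsub]
        refine le_mul_of_one_le_left (Finset.prod_nonneg fun p hp => ?_) ?_
        · linarith [fac p (hS p hp).1.two_le]
        · refine Finset.one_le_prod fun p hp => ?_
          rw [Finset.mem_sdiff, Finset.mem_Ico] at hp
          exact fac p hp.1.1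
      _ ≤ 11 * (1 - 3 / ((X + 5 : ℕ) : ℝ)) := tele _ (by omega)
      _ ≤ 11 := by
        have : (0 : ℝ) ≤ 3 / ((X + 5 : ℕ) : ℝ) := by positivity
        linarith

/-- A tail of `∑ b⁻²` over the multiples of `D`. -/
theorem sum_inv_sq_multiples_le (S : Finset ℕ) (D : ℕ) (hD : 0 < D) (y : ℝ) (hy : 0 < y)
    (hS : ∀ b ∈ S, D ∣ b ∧ y < b) :
    ∑ b ∈ S, 1 / (b : ℝ) ^ 2 ≤ 2 / (y * D) := by
  have hD' : (0 : ℝ) < D := by exact_mod_cast hD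
  set z := y / D with hz
  have hzpos : 0 < z := by positivity
  have hinj : Set.InjOn (fun b => b / D) (S : Set ℕ) := by
    intro a ha b hb hab
    have h1 := Nat.div_mul_cancel (hS a ha).1
    have h2 := Nat.div_mul_cancel (hS b hb).1
    simp only at hab
    rw [← h1, ← h2, hab]
  have h1 : ∑ b ∈ S, 1 / (b : ℝ) ^ 2 =
      ∑ e ∈ S.image (fun b => b / D), ((e : ℝ) ^ 2)⁻¹ / D ^ 2 := by
    rw [Finset.sum_image hinj]
    refine Finset.sum_congr rfl fun b hb => ?_
    rw [Nat.cast_div (hS b hb).1 hD'.ne']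
    have : (0 : ℝ) < b := hy.trans (hS b hb).2
    field_simp
  have h2 : S.image (fun b => b / D) ⊆ Finset.Ioo ⌊z⌋₊ (S.sup id + 1) := by
    intro e he
    obtain ⟨b, hb, rfl⟩ := Finset.mem_image.1 he
    rw [Finset.mem_Ioo]
    constructor
    · rw [Nat.floor_lt hzpos.le, Nat.cast_div (hS b hb).1 hD'.ne', hz]
      exact div_lt_div_of_pos_right (hS b hb).2 hD'
    · exact Nat.lt_succ_of_le ((Nat.div_le_self _ _).trans (Finset.le_sup (f := id) hb))
  rw [h1, ← Finset.sum_div]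
  have h3 : ∑ e ∈ S.image (fun b => b / D), ((e : ℝ) ^ 2)⁻¹ ≤ 2 / z := by
    calc _ ≤ ∑ e ∈ Finset.Ioo ⌊z⌋₊ (S.sup id + 1), ((e : ℝ) ^ 2)⁻¹ :=
          Finset.sum_le_sum_of_subset_of_nonneg h2 fun _ _ _ => by positivity
      _ ≤ 2 / (⌊z⌋₊ + 1) := sum_Ioo_inv_sq_le _ _
      _ ≤ 2 / z := div_le_div_of_nonneg_left (by norm_num) hzpos (Nat.lt_floor_add_one z).le
  calc _ ≤ 2 / z / D ^ 2 := by gcongr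
    _ = _ := by rw [hz]; field_simp

/-- At most `5B` of these integers are `≤ 5B`. The number of the others is at most
`B² ∑_{b > 5B} φ(b)⁻²`, where `(b/φ(b))² = ∏_{p ∣ b} (1 + f(p)) = ∑_{T} ∏_{p ∈ T} f(p)` over sets `T`
of prime divisors of `b`; exchanging the sums leaves a tail of `∑ b⁻²` over multiples of `∏ T`. -/
theorem card_totient_le {B : ℝ} (hB : 0 < B) (Psi : Finset ℕ)
    (hPsi : ∀ b ∈ Psi, 0 < b ∧ (Nat.totient b : ℝ) ≤ B) : (Psi.card : ℝ) ≤ 10 * B := by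
  classical
  set f : ℕ → ℝ := fun p => (p : ℝ) ^ 2 / ((p : ℝ) - 1) ^ 2 - 1 with hf
  set S := Psi.filter fun b : ℕ => 5 * B < (b : ℝ) with hSdef
  set P := S.biUnion Nat.primeFactors with hP
  have hPp : ∀ p ∈ P, p.Prime := fun p hp => by
    obtain ⟨b, -, h⟩ := Finset.mem_biUnion.1 hp
    exact Nat.prime_of_mem_primeFactors h
  have small : ((Psi.filter fun b : ℕ => ¬ 5 * B < (b : ℝ)).card : ℝ) ≤ 5 * B := by
    have : (Psi.filter fun b : ℕ => ¬ 5 * B < (b : ℝ)) ⊆ Finset.Icc 1 ⌊5 * B⌋₊ := by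
      intro b hb
      rw [Finset.mem_filter, not_lt] at hb
      rw [Finset.mem_Icc]
      exact ⟨(hPsi b hb.1).1, Nat.le_floor hb.2⟩
    have := Finset.card_le_card this
    rw [Nat.card_Icc, Nat.add_sub_cancel] at this
    exact (Nat.cast_le.2 this).trans (Nat.floor_le (by positivity))
  have fpos : ∀ p ∈ P, 0 ≤ f p := fun p hp => by
    have h2 : (2 : ℝ) ≤ p := by exact_mod_cast (hPp p hp).two_le
    have : 1 ≤ (p : ℝ) ^ 2 / ((p : ℝ) - 1) ^ 2 := by
      rw [one_le_div (by nlinarith)]; nlinarith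
    simp only [hf]; linarith
  have hphi : ∀ b ∈ S, 1 ≤ B ^ 2 * (1 / (b : ℝ) ^ 2 *
      ∑ T ∈ P.powerset, if T ⊆ b.primeFactors then ∏ p ∈ T, f p else 0) := by
    intro b hb
    obtain ⟨hbP, hb5⟩ := Finset.mem_filter.1 hb
    obtain ⟨hb0, hbB⟩ := hPsi b hbP
    have hbpos : (0 : ℝ) < b := by exact_mod_cast hb0
    have hsub : b.primeFactors ⊆ P := Finset.subset_biUnion_of_mem _ hb
    have e1 : (∑ T ∈ P.powerset, if T ⊆ b.primeFactors then ∏ p ∈ T, f p else 0) =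
        ∏ p ∈ b.primeFactors, (1 + f p) := by
      rw [Finset.prod_one_add, ← Finset.sum_filter]
      refine Finset.sum_congr ?_ fun _ _ => rfl
      ext T
      simp only [Finset.mem_filter, Finset.mem_powerset]
      exact ⟨fun h => h.2, fun h => ⟨h.trans hsub, h⟩⟩
    have e2 : (Nat.totient b : ℝ) = b * ∏ p ∈ b.primeFactors, (1 - (p : ℝ)⁻¹) := by
      have := Nat.totient_eq_mul_prod_factors b
      have := congrArg (fun q : ℚ => (q : ℝ)) this
      push_cast at this
      exact this
    have e3 : (1 / (b : ℝ) ^ 2) * ∏ p ∈ b.primeFactors, (1 + f p) = 1 / (Nat.totient b : ℝ) ^ 2 := by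
      rw [e2, mul_pow, ← Finset.prod_pow, one_div_mul_eq_div, div_eq_div_iff (by positivity)]
      · rw [one_mul, mul_comm, mul_assoc, ← Finset.prod_mul_distrib, Finset.prod_eq_one, mul_one]
        intro p hp
        have h2 : (2 : ℝ) ≤ p := by exact_mod_cast (Nat.prime_of_mem_primeFactors hp).two_le
        have : (p : ℝ) - 1 ≠ 0 := by linarith
        simp only [hf]
        field_simp
        ring
      · refine mul_ne_zero (by positivity) (Finset.prod_ne_zero_iff.2 fun p hp => ?_)
        have h2 : (2 : ℝ) ≤ p := by exact_mod_cast (Nat.prime_of_mem_primeFactors hp).two_le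
        have : (p : ℝ)⁻¹ < 1 := inv_lt_one_of_one_lt₀ (by linarith)
        exact pow_ne_zero _ (by linarith)
    rw [e1, e3, mul_one_div, one_le_div (by have := Nat.totient_pos.2 hb0; positivity)]
    gcongr
  have big : (S.card : ℝ) ≤ 5 * B := by
    calc (S.card : ℝ) = ∑ b ∈ S, (1 : ℝ) := by simp
      _ ≤ ∑ b ∈ S, B ^ 2 * (1 / (b : ℝ) ^ 2 *
          ∑ T ∈ P.powerset, if T ⊆ b.primeFactors then ∏ p ∈ T, f p else 0) :=
          Finset.sum_le_sum hphi
      _ = B ^ 2 * ∑ T ∈ P.powerset, (∏ p ∈ T, f p) *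
          ∑ b ∈ S.filter (fun b => T ⊆ b.primeFactors), 1 / (b : ℝ) ^ 2 := by
          rw [← Finset.mul_sum]
          simp_rw [Finset.mul_sum]
          rw [Finset.sum_comm]
          refine Finset.sum_congr rfl fun T _ => ?_
          rw [Finset.sum_filter (fun b : ℕ => T ⊆ b.primeFactors)]
          refine Finset.sum_congr rfl fun b _ => ?_
          split_ifs <;> ring
      _ ≤ B ^ 2 * ∑ T ∈ P.powerset, (∏ p ∈ T, f p) * (2 / (5 * B * ((∏ p ∈ T, p : ℕ) : ℝ))) := by
          refine mul_le_mul_of_nonneg_left (Finset.sum_le_sum fun T hT => ?_) (by positivity)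
          rw [Finset.mem_powerset] at hT
          refine mul_le_mul_of_nonneg_left ?_ (Finset.prod_nonneg fun p hp => fpos p (hT hp))
          refine sum_inv_sq_multiples_le _ _
            (Finset.prod_pos fun p hp => (hPp p (hT hp)).pos) _ (by positivity) fun b hb => ?_
          rw [Finset.mem_filter] at hb
          exact ⟨Finset.prod_primes_dvd b (fun p hp => (hPp p (hT hp)).prime)
            fun p hp => Nat.dvd_of_mem_primeFactors (hb.2 hp), (Finset.mem_filter.1 hb.1).2⟩
      _ = 2 * B / 5 * ∏ p ∈ P, (1 + f p / p) := by
          rw [Finset.prod_one_add, Finset.mul_sum, Finset.mul_sum]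
          refine Finset.sum_congr rfl fun T hT => ?_
          rw [Finset.prod_div_distrib]
          push_cast
          field_simp
      _ ≤ 2 * B / 5 * 11 := by
          refine mul_le_mul_of_nonneg_left ?_ (by positivity)
          exact prod_primes_le (P.sup id + 1) P fun p hp =>
            ⟨hPp p hp, Nat.lt_succ_of_le (Finset.le_sup (f := id) hp)⟩
      _ ≤ 5 * B := by linarith
  have := Finset.card_filter_add_card_filter_not (s := Psi) (fun b : ℕ => 5 * B < (b : ℝ))
  rw [← this]
  push_cast
  linarith

/-! ### Total variation of a function with small Fisher information -/

/-- With `g = exp ∘ L`, `h = L'`, `k = h'` and `W = (h + e) g / (2η)`, the hypothesis on `k` gives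
`|g'| ≤ η g + W'`. On an interval of length one this bounds the variation of `g` from the left
endpoint; the factor `1 - η` pays for replacing the maximum of `g` by its value there. -/
theorem interval_bound {L h k : ℝ → ℝ} {θ η e : ℝ} (hη : 0 < η) (hη1 : η ≤ 1)
    (hL : ∀ x, θ ≤ x → HasDerivAt L (h x) x) (hh : ∀ x, θ ≤ x → HasDerivAt h (k x) x)
    (hk : ∀ x, θ ≤ x → -k x ≤ η ^ 2 + e * h x) {a y : ℝ} (ha : θ ≤ a)
    (hy : y ∈ Set.Icc a (a + 1)) :
    (1 - η) * |exp (L y) - exp (L a)| ≤ η * exp (L a) +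
      ((h (a + 1) + e) * exp (L (a + 1)) - (h a + e) * exp (L a)) / (2 * η) := by
  set g : ℝ → ℝ := fun x => exp (L x) with hg
  set W : ℝ → ℝ := fun x => (h x + e) * g x / (2 * η) with hW
  have dg : ∀ x, θ ≤ x → HasDerivAt g (h x * g x) x := fun x hx => by
    have := (hL x hx).exp
    simpa [hg, mul_comm] using this
  have dW : ∀ x, θ ≤ x → HasDerivAt W ((k x * g x + (h x + e) * (h x * g x)) / (2 * η)) x :=
    fun x hx => (((hh x hx).add_const e).mul (dg x hx)).div_const _
  have gpos : ∀ x, 0 < g x := fun x => exp_pos _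
  have key : ∀ x, θ ≤ x →
      |h x * g x| ≤ η * g x + (k x * g x + (h x + e) * (h x * g x)) / (2 * η) := by
    intro x hx
    rw [abs_mul, abs_of_pos (gpos x)]
    have h1 := hk x hx
    have h2 : |h x| ≤ η + (k x + (h x + e) * h x) / (2 * η) := by
      rw [← sub_le_iff_le_add', le_div_iff₀ (by positivity)]
      nlinarith [sq_nonneg (|h x| - η), sq_abs (h x)]
    have := mul_le_mul_of_nonneg_right h2 (gpos x).le
    calc |h x| * g x ≤ _ := this
      _ = _ := by ring
  obtain ⟨x0, hx0, hmax⟩ := isCompact_Icc.exists_isMaxOn (s := Set.Icc a (a + 1)) (f := g)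
    ⟨y, hy⟩ (fun x hx => (dg x (ha.trans hx.1)).continuousAt.continuousWithinAt)
  set m := g x0 with hm
  have hle : ∀ x ∈ Set.Icc a (a + 1), g x ≤ m := fun x hx => hmax hx
  -- both `W + η m x + g` and `W + η m x - g` are nondecreasing on the interval
  have mono : ∀ σ : ℝ, |σ| ≤ 1 →
      MonotoneOn (fun x => W x + η * m * x + σ * g x) (Set.Icc a (a + 1)) := by
    intro σ hσ
    have hd : ∀ x, θ ≤ x → HasDerivAt (fun x => W x + η * m * x + σ * g x)
        ((k x * g x + (h x + e) * (h x * g x)) / (2 * η) + η * m * 1 + σ * (h x * g x)) x :=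
      fun x hx => ((dW x hx).add ((hasDerivAt_id x).const_mul _)).add ((dg x hx).const_mul σ)
    refine monotoneOn_of_deriv_nonneg (convex_Icc _ _)
      (fun x hx => (hd x (ha.trans hx.1)).continuousAt.continuousWithinAt)
      (fun x hx => ?_) (fun x hx => ?_)
    · rw [interior_Icc] at hx
      exact (hd x (ha.trans hx.1.le)).differentiableAt.differentiableWithinAt
    · rw [interior_Icc] at hx
      rw [(hd x (ha.trans hx.1.le)).deriv]
      have h1 := key x (ha.trans hx.1.le)
      have h2 := hle x ⟨hx.1.le, hx.2.le⟩
      have h3 : |σ * (h x * g x)| ≤ |h x * g x| := by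
        rw [abs_mul]; exact mul_le_of_le_one_left (abs_nonneg _) hσ
      have h4 := neg_abs_le (σ * (h x * g x))
      have h5 := mul_le_mul_of_nonneg_left h2 hη.le
      linarith
  have haI : a ∈ Set.Icc a (a + 1) := ⟨le_rfl, by linarith⟩
  have hbI : a + 1 ∈ Set.Icc a (a + 1) := ⟨by linarith, le_rfl⟩
  have bd : ∀ x ∈ Set.Icc a (a + 1), |g x - g a| ≤ η * m + W (a + 1) - W a := by
    intro x hx
    have p1 := mono 1 (by simp) haI hx hx.1
    have p2 := mono (-1) (by simp) haI hx hx.1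
    have p3 := mono 0 (by simp) hx hbI hx.2
    simp only at p1 p2 p3
    rw [abs_le]
    constructor <;> linarith
  have h1 := bd y hy
  have h2 := (le_abs_self _).trans (bd x0 hx0)
  have h3 := abs_nonneg (g y - g a)
  have h4 : W (a + 1) - W a = ((h (a + 1) + e) * g (a + 1) - (h a + e) * g a) / (2 * η) := by
    simp only [hW]; ring
  rw [← h4]
  change (1 - η) * |g y - g a| ≤ η * g a + (W (a + 1) - W a)
  nlinarith

/-- Summation of `interval_bound` over the intervals `[m + θ, m + θ + 1]`: the increments of `W`
telescope, `W` is nonnegative at `θ` and tends to `0` because `h` is bounded above. -/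
theorem ratio_bound {L h k : ℝ → ℝ} {θ η e C : ℝ} (hη : 0 < η) (hη1 : η < 1) (he : 0 ≤ e)
    (hL : ∀ x, θ ≤ x → HasDerivAt L (h x) x) (hh : ∀ x, θ ≤ x → HasDerivAt h (k x) x)
    (hk : ∀ x, θ ≤ x → -k x ≤ η ^ 2 + e * h x) (hθ : 0 ≤ h θ) (hC : ∀ x, θ ≤ x → h x ≤ C)
    (hs : ∀ τ, θ ≤ τ → Summable fun m : ℕ => exp (L (m + τ))) {τ : ℝ}
    (hτ : τ ∈ Set.Icc θ (θ + 1)) :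
    |(∑' m : ℕ, exp (L (m + τ))) / (∑' m : ℕ, exp (L (m + θ))) - 1| ≤ η / (1 - η) := by
  set S := ∑' m : ℕ, exp (L (m + θ)) with hS
  set T := ∑' m : ℕ, exp (L (m + τ)) with hT
  have hSpos : 0 < S := (hs θ le_rfl).tsum_pos (fun _ => (exp_pos _).le) 0 (exp_pos _)
  have part : ∀ K : ℕ, (1 - η) * |∑ m ∈ range K, exp (L (m + τ)) - ∑ m ∈ range K, exp (L (m + θ))|
      ≤ η * ∑ m ∈ range K, exp (L (m + θ)) + (C + e) / (2 * η) * exp (L (K + θ)) := by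
    intro K
    have h1 : ∀ m ∈ range K, (1 - η) * |exp (L (m + τ)) - exp (L (m + θ))| ≤
        η * exp (L (m + θ)) +
          ((h ((m + 1 : ℕ) + θ) + e) * exp (L ((m + 1 : ℕ) + θ)) / (2 * η)
            - (h (m + θ) + e) * exp (L (m + θ)) / (2 * η)) := by
      intro m _
      have := interval_bound hη hη1.le hL hh hk (a := m + θ) (y := m + τ)
        (by linarith [(m.cast_nonneg : (0 : ℝ) ≤ m)])
        ⟨by linarith [hτ.1], by linarith [hτ.2]⟩
      have e1 : (m : ℝ) + θ + 1 = ((m + 1 : ℕ) : ℝ) + θ := by push_cast; ring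
      rw [e1, sub_div] at this
      exact this
    have h2 := Finset.sum_le_sum h1
    rw [← Finset.mul_sum, Finset.sum_add_distrib, ← Finset.mul_sum,
      Finset.sum_range_sub (fun m : ℕ => (h (m + θ) + e) * exp (L (m + θ)) / (2 * η))] at h2
    have h3 : |∑ m ∈ range K, exp (L (m + τ)) - ∑ m ∈ range K, exp (L (m + θ))| ≤
        ∑ m ∈ range K, |exp (L (m + τ)) - exp (L (m + θ))| := by
      rw [← Finset.sum_sub_distrib]; exact Finset.abs_sum_le_sum_abs _ _
    have h4 : 0 ≤ (h (((0 : ℕ) : ℝ) + θ) + e) * exp (L (((0 : ℕ) : ℝ) + θ)) / (2 * η) := by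
      rw [Nat.cast_zero, zero_add]; positivity
    have h5 : (h (K + θ) + e) * exp (L (K + θ)) / (2 * η) ≤ (C + e) / (2 * η) * exp (L (K + θ)) := by
      rw [div_mul_eq_mul_div]
      have := hC (K + θ) (by linarith [(K.cast_nonneg : (0 : ℝ) ≤ K)])
      gcongr
    have h6 := mul_le_mul_of_nonneg_left h3 (sub_nonneg.2 hη1.le)
    linarith
  have lS := (hs θ le_rfl).hasSum.tendsto_sum_nat
  have lT := (hs τ hτ.1).hasSum.tendsto_sum_nat
  have l0 := (hs θ le_rfl).tendsto_atTop_zero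
  have lim := le_of_tendsto_of_tendsto' ((lT.sub lS).abs.const_mul (1 - η))
    ((lS.const_mul η).add (l0.const_mul ((C + e) / (2 * η)))) part
  rw [mul_zero, add_zero] at lim
  rw [div_sub_one hSpos.ne', abs_div, abs_of_pos hSpos,
    div_le_div_iff₀ hSpos (sub_pos.2 hη1)]
  linarith

/-! ### The logarithm of the summand -/

/-- The logarithm of `x ∏_{θ∈F} ∏_{j<M} (x+j+θ) / ∏_{j≤n} (x+p+j)^{s+1}`, the `n`-th auxiliary function
without its constant prefactor at `t = x + p`; here `p = r n` and `M = (2r+1) n`. -/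
def logG (F : Finset ℚ) (s p M n : ℕ) (x : ℝ) : ℝ :=
  log x + ∑ θ ∈ F, ∑ j ∈ range M, log (x + j + θ) - (s + 1) * ∑ j ∈ range (n + 1), log (x + p + j)

/-- The derivative of `logG`. -/
def logG' (F : Finset ℚ) (s p M n : ℕ) (x : ℝ) : ℝ :=
  1 / x + ∑ θ ∈ F, ∑ j ∈ range M, 1 / (x + j + θ) - (s + 1) * ∑ j ∈ range (n + 1), 1 / (x + p + j)

/-- The second derivative of `logG`. -/
def logG'' (F : Finset ℚ) (s p M n : ℕ) (x : ℝ) : ℝ :=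
  -1 / x ^ 2 + ∑ θ ∈ F, ∑ j ∈ range M, -1 / (x + j + θ) ^ 2
    - (s + 1) * ∑ j ∈ range (n + 1), -1 / (x + p + j) ^ 2

section
variable {F : Finset ℚ} {s p M n : ℕ}

theorem hasDerivAt_logG (hF : ∀ θ ∈ F, (0 : ℝ) < θ) {x : ℝ} (hx : 0 < x) :
    HasDerivAt (logG F s p M n) (logG' F s p M n x) x := by
  unfold logG'
  refine ((HasDerivAt.log (hasDerivAt_id x) hx.ne').add
    (HasDerivAt.fun_sum fun θ hθ => HasDerivAt.fun_sum fun j _ => ?_)).sub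
    ((HasDerivAt.fun_sum fun j _ => ?_).const_mul _)
  · have := hF θ hθ
    exact (((hasDerivAt_id x).add_const _).add_const _).log (by simp; positivity)
  · exact (((hasDerivAt_id x).add_const _).add_const _).log (by simp; positivity)

theorem hasDerivAt_logG' (hF : ∀ θ ∈ F, (0 : ℝ) < θ) {x : ℝ} (hx : 0 < x) :
    HasDerivAt (logG' F s p M n) (logG'' F s p M n x) x := by
  unfold logG''
  have inv : ∀ c : ℝ, 0 ≤ c → HasDerivAt (fun x : ℝ => 1 / (x + c)) (-1 / (x + c) ^ 2) x := by
    intro c hc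
    simpa using ((hasDerivAt_id x).add_const c).fun_inv (by simp; positivity)
  refine (((by simpa using inv 0 le_rfl) : HasDerivAt (fun x : ℝ => 1 / x) (-1 / x ^ 2) x).add
    (HasDerivAt.fun_sum fun θ hθ => HasDerivAt.fun_sum fun j _ => ?_)).sub
    ((HasDerivAt.fun_sum fun j _ => ?_).const_mul _)
  · have := hF θ hθ
    simpa only [add_assoc] using inv (j + θ) (by positivity)
  · simpa only [add_assoc] using inv (p + j) (by positivity)

theorem exp_logG (hF : ∀ θ ∈ F, (0 : ℝ) < θ) {x : ℝ} (hx : 0 < x) :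
    exp (logG F s p M n x) = x * (∏ θ ∈ F, ∏ j ∈ range M, (x + j + (θ : ℝ))) /
      ∏ j ∈ range (n + 1), (x + p + j) ^ (s + 1) := by
  unfold logG
  rw [exp_sub, exp_add, exp_log hx, exp_sum]
  congr 1
  · congr 1
    refine Finset.prod_congr rfl fun θ hθ => ?_
    rw [exp_sum]
    refine Finset.prod_congr rfl fun j _ => exp_log ?_
    have := hF θ hθ
    positivity
  · rw [Finset.mul_sum, exp_sum]
    refine Finset.prod_congr rfl fun j _ => ?_
    rw [← Nat.cast_add_one, exp_nat_mul, exp_log (by positivity)]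

theorem logG'_le (hF : ∀ θ ∈ F, (0 : ℝ) < θ) {τ x : ℝ} (hτ : 0 < τ) (hx : τ ≤ x) :
    logG' F s p M n x ≤ (1 + F.card * M) / τ := by
  unfold logG'
  have hx0 := hτ.trans_le hx
  have h1 : ∑ θ ∈ F, ∑ j ∈ range M, 1 / (x + j + (θ : ℝ)) ≤ ∑ θ ∈ F, ∑ j ∈ range M, 1 / τ := by
    refine Finset.sum_le_sum fun θ hθ => Finset.sum_le_sum fun j _ => ?_
    have := hF θ hθ
    have hj : (0 : ℝ) ≤ j := j.cast_nonneg
    exact one_div_le_one_div_of_le hτ (by linarith)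
  have h2 : 0 ≤ ((s : ℝ) + 1) * ∑ j ∈ range (n + 1), 1 / (x + p + (j : ℝ)) := by positivity
  have h3 : 1 / x ≤ 1 / τ := one_div_le_one_div_of_le hτ hx
  simp only [Finset.sum_const, card_range, nsmul_eq_mul] at h1
  have : (1 + (F.card : ℝ) * M) / τ = 1 / τ + F.card * (M * (1 / τ)) := by ring
  linarith

/-- Under the degree condition `hdeg`, the summand is `O(x⁻²)`. -/
theorem summable_logG (hF : ∀ θ ∈ F, (0 : ℝ) < θ ∧ (θ : ℝ) ≤ 1) (hp : 0 < p)
    (hM : M = 2 * p + n) (hdeg : 3 + F.card * M ≤ (s + 1) * (n + 1)) {τ : ℝ} (hτ : 0 < τ) :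
    Summable fun m : ℕ => exp (logG F s p M n (m + τ)) := by
  have hp1 : (1 : ℝ) ≤ p := by exact_mod_cast hp
  have hn0 : (0 : ℝ) ≤ n := n.cast_nonneg
  have bound : ∀ x : ℝ, 0 < x →
      exp (logG F s p M n x) ≤ (2 + n) ^ (F.card * M) * (1 / (x + p) ^ 2) := by
    intro x hx
    have hy : 1 ≤ x + p := by linarith
    have hy0 : 0 < x + p := by linarith
    rw [exp_logG (fun θ hθ => (hF θ hθ).1) hx]
    have num : ∏ θ ∈ F, ∏ j ∈ range M, (x + j + (θ : ℝ)) ≤ ((2 + n) * (x + p)) ^ (F.card * M) := by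
      calc _ ≤ ∏ θ ∈ F, ∏ j ∈ range M, ((2 + (n : ℝ)) * (x + p)) := by
            refine Finset.prod_le_prod (fun θ hθ => Finset.prod_nonneg fun j _ => ?_)
              fun θ hθ => Finset.prod_le_prod (fun j _ => ?_) fun j hj => ?_
            · have := (hF θ hθ).1; positivity
            · have := (hF θ hθ).1; positivity
            · have h1 := (hF θ hθ).2
              have h2 : (j : ℝ) + 1 ≤ M := by exact_mod_cast Finset.mem_range.1 hj
              rw [hM] at h2
              push_cast at h2
              nlinarith
        _ = _ := by
            rw [Finset.prod_const, Finset.prod_const, card_range, ← pow_mul, mul_comm M]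
    have den : (x + p) ^ (3 + F.card * M) ≤ ∏ j ∈ range (n + 1), (x + p + (j : ℝ)) ^ (s + 1) := by
      calc (x + p) ^ (3 + F.card * M) ≤ (x + p) ^ ((s + 1) * (n + 1)) :=
            pow_le_pow_right₀ hy hdeg
        _ = ∏ j ∈ range (n + 1), (x + (p : ℝ)) ^ (s + 1) := by
            rw [Finset.prod_const, card_range, pow_mul]
        _ ≤ _ := Finset.prod_le_prod (fun _ _ => by positivity) fun j _ =>
            pow_le_pow_left₀ hy0.le (by linarith [(j.cast_nonneg : (0 : ℝ) ≤ j)]) _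
    calc _ ≤ (x + p) * ((2 + n) * (x + p)) ^ (F.card * M) / (x + p) ^ (3 + F.card * M) := by
          refine div_le_div₀ (by positivity) ?_ (by positivity) den
          refine mul_le_mul (by linarith) num (Finset.prod_nonneg fun θ hθ =>
            Finset.prod_nonneg fun j _ => ?_) hy0.le
          have := (hF θ hθ).1; positivity
      _ = _ := by
          rw [mul_pow, pow_add]
          field_simp
  refine Summable.of_nonneg_of_le (fun _ => (exp_pos _).le) (fun m => ?_)
    (((summable_nat_add_iff 1).2
      (Real.summable_one_div_nat_pow.2 (by norm_num : 1 < 2))).mul_left ((2 + n : ℝ) ^ (F.card * M)))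
  refine (bound (m + τ) (by positivity)).trans ?_
  refine mul_le_mul_of_nonneg_left (one_div_le_one_div_of_le (by positivity) ?_) (by positivity)
  have : (0 : ℝ) ≤ m := m.cast_nonneg
  push_cast
  exact pow_le_pow_left₀ (by linarith) (by linarith) _

/-- A bound for `-(log G)''` that depends on neither `n`, `M` nor `p`. The negative terms of
`(log G)'` only help, and the others are squares summed by telescoping. -/
theorem neg_logG''_le (hF : ∀ θ ∈ F, (0 : ℝ) < θ) {τ x : ℝ} (hτ : 0 < τ) (hx : τ ≤ x) :
    -logG'' F s p M n x ≤ (F.card + 1) * (1 + 1 / τ) / x := by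
  have hx0 := hτ.trans_le hx
  -- `1/(y+1)² ≤ 1/y - 1/(y+1)`
  have tel : ∀ K : ℕ, ∑ j ∈ range (K + 1), 1 / (x + j) ^ 2 ≤ 1 / x ^ 2 + 1 / x - 1 / (x + K) := by
    intro K
    induction K with
    | zero => simp
    | succ K ih =>
      rw [Finset.sum_range_succ]
      have hy : 0 < x + K := by positivity
      have h1 : 1 / (x + (K + 1 : ℕ)) ^ 2 ≤ 1 / (x + K) - 1 / (x + (K + 1 : ℕ)) := by
        rw [div_sub_div _ _ hy.ne' (by positivity), div_le_div_iff₀ (by positivity) (by positivity)]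
        push_cast
        nlinarith
      linarith
  have inner : ∀ θ ∈ F, ∑ j ∈ range M, 1 / (x + j + (θ : ℝ)) ^ 2 ≤ 1 / x ^ 2 + 1 / x := by
    intro θ hθ
    calc _ ≤ ∑ j ∈ range M, 1 / (x + j) ^ 2 := Finset.sum_le_sum fun j _ => by
          have := hF θ hθ
          have hj : (0 : ℝ) ≤ j := j.cast_nonneg
          exact one_div_le_one_div_of_le (by positivity)
            (pow_le_pow_left₀ (by linarith) (by linarith) _)
      _ ≤ ∑ j ∈ range (M + 1), 1 / (x + j) ^ 2 :=
          Finset.sum_le_sum_of_subset_of_nonneg (Finset.range_mono M.le_succ)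
            fun _ _ _ => by positivity
      _ ≤ _ := (tel M).trans (by
          have : 0 ≤ 1 / (x + (M : ℝ)) := by positivity
          linarith)
  have h1 := Finset.sum_le_sum inner
  have h2 : 0 ≤ ((s : ℝ) + 1) * ∑ j ∈ range (n + 1), 1 / (x + p + (j : ℝ)) ^ 2 := by positivity
  have h3 : 1 / x ^ 2 + 1 / x ≤ (1 + 1 / τ) / x := by
    have : 1 / x ≤ 1 / τ := one_div_le_one_div_of_le hτ hx
    calc 1 / x ^ 2 + 1 / x = (1 + 1 / x) / x := by field_simp; ring
      _ ≤ _ := by gcongr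
  have h4 : -logG'' F s p M n x = 1 / x ^ 2 + ∑ θ ∈ F, ∑ j ∈ range M, 1 / (x + j + (θ : ℝ)) ^ 2
      - (s + 1) * ∑ j ∈ range (n + 1), 1 / (x + p + j) ^ 2 := by
    unfold logG''
    simp only [neg_div, Finset.sum_neg_distrib]
    ring
  have h5 : (0 : ℝ) ≤ 1 / x := by positivity
  have h6 := mul_le_mul_of_nonneg_left h3 (by positivity : (0 : ℝ) ≤ (F.card : ℝ) + 1)
  rw [Finset.sum_const, nsmul_eq_mul] at h1
  rw [h4, mul_div_assoc]
  linarith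

/-- The negative part of `(log G)'` is bounded, since its `n + 1` terms are at most `1/(r n)`; from the
positive part only `θ = 1` and `j < n` are kept. -/
theorem le_logG'_add (hF : ∀ θ ∈ F, (0 : ℝ) < θ) (h1F : 1 ∈ F) (hn : n ≤ M) {r : ℝ}
    (hr : 0 < r) (hpr : (p : ℝ) = r * n) (hn0 : 0 < n) {x : ℝ} (hx : 0 < x) :
    ∑ j ∈ range n, 1 / (x + j + 1) ≤ logG' F s p M n x + 2 * (s + 1) / r := by
  have hn1 : (1 : ℝ) ≤ n := by exact_mod_cast hn0
  have h1 : ∑ j ∈ range (n + 1), 1 / (x + p + (j : ℝ)) ≤ 2 / r := by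
    calc _ ≤ ∑ j ∈ range (n + 1), 1 / (r * n) := Finset.sum_le_sum fun j _ =>
          one_div_le_one_div_of_le (by positivity)
            (by rw [hpr]; linarith [(j.cast_nonneg : (0 : ℝ) ≤ j)])
      _ = (n + 1) / (r * n) := by
          rw [Finset.sum_const, card_range, nsmul_eq_mul]; push_cast; ring
      _ ≤ 2 / r := by
          rw [div_le_div_iff₀ (by positivity) hr]; nlinarith
  have h2 : ∑ j ∈ range n, 1 / (x + j + 1) ≤ ∑ θ ∈ F, ∑ j ∈ range M, 1 / (x + j + (θ : ℝ)) := by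
    calc _ ≤ ∑ j ∈ range M, 1 / (x + j + 1) :=
          Finset.sum_le_sum_of_subset_of_nonneg (Finset.range_mono hn)
            fun _ _ _ => by positivity
      _ = ∑ j ∈ range M, 1 / (x + j + ((1 : ℚ) : ℝ)) := by simp
      _ ≤ _ := Finset.single_le_sum (f := fun θ : ℚ => ∑ j ∈ range M, 1 / (x + j + (θ : ℝ)))
          (fun θ hθ => Finset.sum_nonneg fun j _ => by have := hF θ hθ; positivity) h1F
  have h3 := mul_le_mul_of_nonneg_left h1 (by positivity : (0 : ℝ) ≤ (s : ℝ) + 1)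
  have h4 : 0 ≤ 1 / x := by positivity
  have h5 : 2 * ((s : ℝ) + 1) / r = (s + 1) * (2 / r) := by ring
  unfold logG'
  linarith

/-- `K` is chosen so that `-(log G)'' ≤ η²/2` beyond `K`. On `[θ, K]` the quantity `(log G)' + C` exceeds
any given `A` for large `n`, and `e = D/(θA)` then satisfies `e ((log G)' + C) ≥ D/θ ≥ -(log G)''`;
`A` is large enough for `e C ≤ η²/2` and for `(log G)'(θ) ≥ 0`. -/
theorem ratio_logG_eventually (F : Finset ℚ) (s : ℕ) (hF : ∀ θ ∈ F, (0 : ℝ) < θ ∧ (θ : ℝ) ≤ 1)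
    (h1F : 1 ∈ F) {r : ℝ} (hr : 0 < r) {θ η : ℝ} (hθ : 0 < θ) (hθ1 : θ ≤ 1) (hη : 0 < η)
    (hη1 : η < 1) :
    ∀ᶠ n : ℕ in atTop, ∀ p M : ℕ, (p : ℝ) = r * n → M = 2 * p + n →
      3 + F.card * M ≤ (s + 1) * (n + 1) →
      |(∑' m : ℕ, exp (logG F s p M n (m + 1))) / (∑' m : ℕ, exp (logG F s p M n (m + θ))) - 1|
        ≤ η / (1 - η) := by
  set D : ℝ := (F.card + 1) * (1 + 1 / θ) with hD
  set C : ℝ := 2 * (s + 1) / r with hC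
  have hDpos : 0 < D := by positivity
  have hCpos : 0 < C := by positivity
  obtain ⟨K, hK⟩ := exists_nat_ge (1 + 2 * D / η ^ 2)
  set A : ℝ := max C (2 * D * C / (θ * η ^ 2)) with hA
  have hApos : 0 < A := hCpos.trans_le (le_max_left _ _)
  have hKpos : (1 : ℝ) ≤ K := le_trans (by linarith [show 0 ≤ 2 * D / η ^ 2 by positivity]) hK
  have hDK : D / K ≤ η ^ 2 / 2 := by
    have : 2 * D / η ^ 2 ≤ K := by linarith
    rw [div_le_iff₀ (by positivity)] at this
    rw [div_le_div_iff₀ (by linarith) (by norm_num)]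
    linarith
  set e : ℝ := D / (θ * A) with he
  have hepos : 0 < e := by positivity
  have heC : e * C ≤ η ^ 2 / 2 := by
    have : 2 * D * C / (θ * η ^ 2) ≤ A := le_max_right _ _
    rw [div_le_iff₀ (by positivity)] at this
    rw [he, div_mul_eq_mul_div, div_le_div_iff₀ (by positivity) (by norm_num)]
    linarith
  have hharm := (tendsto_sum_range_one_div_nat_succ_atTop.eventually_ge_atTop ((K + 1) * A))
  filter_upwards [hharm, eventually_gt_atTop 0] with n hn hn0 p M hp hM hdeg
  have hF' : ∀ θ ∈ F, (0 : ℝ) < θ := fun θ hθ => (hF θ hθ).1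
  have hn0' : (0 : ℝ) < n := by exact_mod_cast hn0
  have hp0 : 0 < p := by
    have : (0 : ℝ) < p := by rw [hp]; positivity
    exact_mod_cast this
  have lower : ∀ x, θ ≤ x →
      ∑ j ∈ range n, 1 / (x + j + 1) ≤ logG' F s p M n x + C := fun x hx =>
    le_logG'_add hF' h1F (by omega) hr hp hn0 (hθ.trans_le hx)
  have lower' : ∀ x, θ ≤ x → x ≤ K → A ≤ logG' F s p M n x + C := by
    intro x hx hxK
    have hx0 := hθ.trans_le hx
    refine le_trans ?_ (lower x hx)
    have h1 : (1 / ((K : ℝ) + 1)) * ∑ j ∈ range n, 1 / ((j : ℝ) + 1) ≤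
        ∑ j ∈ range n, 1 / (x + j + 1) := by
      rw [Finset.mul_sum]
      refine Finset.sum_le_sum fun j _ => ?_
      rw [one_div_mul_one_div]
      refine one_div_le_one_div_of_le (by positivity) ?_
      nlinarith [(j.cast_nonneg : (0 : ℝ) ≤ j)]
    refine le_trans ?_ h1
    rw [one_div_mul_eq_div, le_div_iff₀ (by positivity)]
    linarith
  refine ratio_bound (C := (1 + F.card * M) / θ) hη hη1 hepos.le
    (fun x hx => hasDerivAt_logG hF' (hθ.trans_le hx))
    (fun x hx => hasDerivAt_logG' hF' (hθ.trans_le hx)) (fun x hx => ?_) ?_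
    (fun x hx => logG'_le hF' hθ hx)
    (fun τ hτ => summable_logG hF hp0 hM hdeg (hθ.trans_le hτ)) ⟨hθ1, by linarith⟩
  · have hx0 := hθ.trans_le hx
    have h1 : -logG'' F s p M n x ≤ D / x := neg_logG''_le hF' hθ hx
    rcases le_total x K with hxK | hxK
    · have h2 : D / x ≤ D / θ := div_le_div_of_nonneg_left hDpos.le hθ hx
      have h3 : D / θ = e * A := by rw [he]; field_simp
      have h4 := mul_le_mul_of_nonneg_left (lower' x hx hxK) hepos.le
      nlinarith [sq_nonneg η]
    · have h2 : D / x ≤ D / K := div_le_div_of_nonneg_left hDpos.le (by linarith) hxK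
      have h0 : 0 ≤ ∑ j ∈ range n, 1 / (x + (j : ℝ) + 1) := by positivity
      have h3 : 0 ≤ logG' F s p M n x + C := h0.trans (lower x hx)
      have h4 := mul_nonneg hepos.le h3
      linarith
  · have h1 := lower' θ le_rfl (hθ1.trans hKpos)
    have h2 : C ≤ A := le_max_left _ _
    linarith

end

/-! ### Reduction of the auxiliary function to `logG` -/

theorem mem_zeroSet_bounds {Psi : Finset ℕ} {θ : ℚ} (hθ : θ ∈ zeroSet Psi) :
    0 < θ ∧ θ ≤ 1 ∧ (θ = 1 ∨ 1 - θ ∈ zeroSet Psi) := by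
  simp only [zeroSet, Finset.mem_biUnion, Finset.mem_image, Finset.mem_filter,
    Finset.mem_Icc] at hθ ⊢
  obtain ⟨b, hb, a, ⟨⟨ha1, hab⟩, hco⟩, rfl⟩ := hθ
  have ha0 : (0 : ℚ) < a := by exact_mod_cast ha1
  have hb0 : (0 : ℚ) < b := by exact_mod_cast ha1.trans hab
  refine ⟨by positivity, (div_le_one hb0).2 (by exact_mod_cast hab), ?_⟩
  rcases hab.eq_or_lt with rfl | hlt
  · left; exact div_self hb0.ne'
  · right
    refine ⟨b, hb, b - a, ⟨⟨by omega, by omega⟩, ?_⟩, ?_⟩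
    · exact (Nat.coprime_self_sub_left hab).2 hco
    · rw [Nat.cast_sub hab]; field_simp

theorem card_zeroSet_le {B : ℝ} (hB : 1 ≤ B) (Psi : Finset ℕ)
    (hPsi : ∀ b ∈ Psi, 0 < b ∧ (Nat.totient b : ℝ) ≤ B) :
    ((zeroSet Psi).card : ℝ) ≤ 10 * B ^ 2 := by
  have h1 : (zeroSet Psi).card ≤ ∑ b ∈ Psi, Nat.totient b := by
    refine Finset.card_biUnion_le.trans (Finset.sum_le_sum fun b _ => Finset.card_image_le.trans ?_)
    rw [← Nat.filter_coprime_Ico_eq_totient b 1]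
    refine Finset.card_le_card fun a ha => ?_
    simp only [Finset.mem_filter, Finset.mem_Icc, Finset.mem_Ico] at ha ⊢
    exact ⟨⟨ha.1.1, by omega⟩, ha.2.symm⟩
  have h2 : (∑ b ∈ Psi, (Nat.totient b : ℝ)) ≤ Psi.card * B := by
    rw [← nsmul_eq_mul]
    exact Finset.sum_le_card_nsmul _ _ _ fun b hb => (hPsi b hb).2
  have h3 := card_totient_le (by linarith) Psi hPsi
  have h4 : ((zeroSet Psi).card : ℝ) ≤ ∑ b ∈ Psi, (Nat.totient b : ℝ) := by exact_mod_cast h1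
  nlinarith

/-- The factor of `Rfun` that does not depend on the variable `t`. -/
def prefactor (Psi : Finset ℕ) (r : ℚ) (s n : ℕ) : ℝ :=
  A1 Psi r ^ n * A2 Psi r ^ n *
    ((n.factorial : ℝ) ^ (s + 1) /
      (((n / r.den).factorial : ℝ)) ^ ((2 * r.num.toNat + r.den) * (zeroSet Psi).card))

theorem prefactor_ne_zero {Psi : Finset ℕ} (hPsi : ∀ b ∈ Psi, 0 < b) (r : ℚ) (s n : ℕ) :
    prefactor Psi r s n ≠ 0 := by
  have h1 : 0 < A1 Psi r := Finset.prod_pos fun b hb =>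
    Real.rpow_pos_of_pos (by exact_mod_cast hPsi b hb) _
  have h2 : 0 < A2 Psi r := Finset.prod_pos fun b hb => Finset.prod_pos fun p hp =>
    Real.rpow_pos_of_pos (by exact_mod_cast Nat.pos_of_mem_primeFactors hp) _
  unfold prefactor
  positivity

/-- The first `p - 1` terms of the series vanish; the remaining ones are values of `exp ∘ logG`. -/
theorem tsum_Rfun {Psi : Finset ℕ} (hF : ∀ θ ∈ zeroSet Psi, (0 : ℝ) < θ) {r : ℚ} {s n p : ℕ}
    (hp : p = r.num.toNat * (n / r.den)) (hp0 : 0 < p) (hpr : (p : ℝ) = r * n)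
    {θ : ℚ} (hθ : θ ∈ zeroSet Psi) :
    ∑' m : ℕ, Rfun Psi r s n ((m : ℝ) + 1 + θ) =
      prefactor Psi r s n * ∑' m : ℕ, exp (logG (zeroSet Psi) s p (2 * p + n) n (m + θ)) := by
  have hθ0 := hF θ hθ
  have hinj : Function.Injective fun k : ℕ => k + (p - 1) := add_left_injective _
  have hsupp : Function.support (fun m : ℕ => Rfun Psi r s n ((m : ℝ) + 1 + θ)) ⊆
      Set.range fun k : ℕ => k + (p - 1) := by
    intro m hm
    by_contra hcon
    have hmp : m + 1 < p := by
      by_contra h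
      exact hcon ⟨m - (p - 1), by simp only; omega⟩
    refine hm ?_
    simp only [Rfun, ← hp, ← hpr]
    -- a zero comes from `θ' = 1 - θ`; when `θ = 1`, from `θ' = 1` or from the factor `t - r n`
    have zero : ∀ θ' ∈ zeroSet Psi, ∀ j : ℕ, j < 2 * p + n →
        (m : ℝ) + 1 + θ - p + j + θ' = 0 →
        ∏ θ' ∈ zeroSet Psi, ∏ j ∈ Finset.range (2 * p + n),
          ((m : ℝ) + 1 + θ - p + (j : ℝ) + (θ' : ℝ)) = 0 := fun θ' hθ' j hj h =>
      Finset.prod_eq_zero hθ' (Finset.prod_eq_zero (Finset.mem_range.2 hj) h)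
    have hpm : ((p - 1 - (m + 1) : ℕ) : ℝ) = p - 1 - (m + 1) := by
      rw [Nat.cast_sub (by omega), Nat.cast_sub (by omega)]; push_cast; ring
    have : ((m : ℝ) + 1 + θ - p) * ∏ θ' ∈ zeroSet Psi, ∏ j ∈ Finset.range (2 * p + n),
          ((m : ℝ) + 1 + θ - p + (j : ℝ) + (θ' : ℝ)) = 0 := by
      rcases (mem_zeroSet_bounds hθ).2.2 with h1 | h1
      · by_cases hm2 : m + 2 = p
        · have : (m : ℝ) + 2 = p := by exact_mod_cast hm2
          rw [h1, Rat.cast_one, show (m : ℝ) + 1 + 1 - p = 0 by linarith, zero_mul]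
        · have hpm : ((p - (m + 3) : ℕ) : ℝ) = p - (m + 3) := by
            rw [Nat.cast_sub (by omega)]; push_cast; ring
          rw [zero θ hθ (p - (m + 3)) (by omega) (by rw [hpm, h1]; push_cast; ring), mul_zero]
      · rw [zero (1 - θ) h1 (p - 1 - (m + 1)) (by omega) (by rw [hpm]; push_cast; ring), mul_zero]
    rw [this, mul_zero, zero_div]
  rw [← hinj.tsum_eq hsupp, ← tsum_mul_left]
  refine tsum_congr fun k => ?_
  have ht : ((k + (p - 1) : ℕ) : ℝ) + 1 + θ = k + θ + p := by
    rw [Nat.cast_add, Nat.cast_sub hp0]; push_cast; ring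
  rw [exp_logG hF (by positivity)]
  simp only [Rfun, ← hp, ← hpr, ht, prefactor, add_sub_cancel_right]
  rw [mul_div_assoc]

/-- Analysis lemma, second part: there is an absolute constant `B₀` such that whenever
`B ≥ B₀`, `r` is a positive rational and `s` is an odd positive integer with
`s ≥ 10(2r+1)B²`, for every `θ ∈ 𝓕_B` the limit of `r_{n,1}/r_{n,θ}` over positive
integers `n` divisible by `P_{B,den(r)}` is `1`, where `r_{n,θ} = ∑_{m=1}^{∞} R_n(m+θ)`. -/
theorem analysis_lemma_ratio :
    ∃ B₀ : ℝ, ∀ B : ℝ, B₀ ≤ B → ∀ r : ℚ, 0 < r →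
      ∀ Psi : Finset ℕ, (∀ b : ℕ, b ∈ Psi ↔ 0 < b ∧ (Nat.totient b : ℝ) ≤ B) →
      ∀ s : ℕ, Odd s → 10 * (2 * (r : ℝ) + 1) * B ^ 2 ≤ (s : ℝ) →
      ∀ θ ∈ zeroSet Psi,
      Tendsto
        (fun n : ℕ => (∑' m : ℕ, Rfun Psi r s n ((m : ℝ) + 1 + 1)) /
          (∑' m : ℕ, Rfun Psi r s n ((m : ℝ) + 1 + (θ : ℝ))))
        (atTop ⊓ Filter.principal {n : ℕ | 0 < n ∧ Pconst Psi r ∣ n})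
        (nhds 1) := by
  refine ⟨1, fun B hB r hr Psi hPsi s _ hsB θ hθ => ?_⟩
  have hPsi' : ∀ b ∈ Psi, 0 < b ∧ (Nat.totient b : ℝ) ≤ B := fun b hb => (hPsi b).1 hb
  have hF : ∀ θ ∈ zeroSet Psi, (0 : ℝ) < θ ∧ (θ : ℝ) ≤ 1 := fun θ hθ => by
    have := mem_zeroSet_bounds hθ
    exact ⟨by exact_mod_cast this.1, by exact_mod_cast this.2.1⟩
  have h1F : (1 : ℚ) ∈ zeroSet Psi := by
    refine Finset.mem_biUnion.2 ⟨1, (hPsi 1).2 ⟨one_pos, by simpa using hB⟩, ?_⟩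
    simp
  have hrR : (0 : ℝ) < r := by exact_mod_cast hr
  have hcard := card_zeroSet_le hB Psi hPsi'
  rw [Metric.tendsto_nhds]
  intro ε hε
  set η : ℝ := ε / (2 * (1 + ε)) with hη
  have hη0 : 0 < η := by positivity
  have hη1 : η < 1 := by rw [hη, div_lt_one (by positivity)]; linarith
  have hηε : η / (1 - η) < ε := by
    rw [div_lt_iff₀ (by linarith), hη]
    have : ε * (1 - ε / (2 * (1 + ε))) - ε / (2 * (1 + ε)) = ε / 2 := by field_simp; ring
    linarith
  have main := ratio_logG_eventually (zeroSet Psi) s hF h1F hrR (hF θ hθ).1 (hF θ hθ).2 hη0 hη1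
  rw [Filter.eventually_inf_principal]
  filter_upwards [main] with n hn hmem
  obtain ⟨hn0, hdvd⟩ := hmem
  have hden : r.den ∣ n := (Dvd.intro_left 2 rfl |>.mul_right _).trans hdvd
  obtain ⟨q, rfl⟩ := hden
  have hnum : ((r.num.toNat : ℕ) : ℝ) = r * r.den := by
    have h1 : ((r.num.toNat : ℕ) : ℤ) = r.num := Int.toNat_of_nonneg (Rat.num_pos.2 hr).le
    have h2 : (r.num : ℚ) = r * r.den := (Rat.mul_den_eq_num r).symm
    have h3 : ((r.num.toNat : ℕ) : ℚ) = r * r.den := by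
      rw [← h2, ← Int.cast_natCast, h1]
    exact_mod_cast h3
  set p := r.num.toNat * (r.den * q / r.den) with hp
  have hpr : (p : ℝ) = r * (r.den * q : ℕ) := by
    rw [hp, Nat.mul_div_cancel_left _ r.den_pos]
    push_cast
    rw [hnum]; ring
  have hn1 : (1 : ℝ) ≤ (r.den * q : ℕ) := by exact_mod_cast hn0
  have hp0 : 0 < p := by
    have : (0 : ℝ) < p := by rw [hpr]; positivity
    exact_mod_cast this
  -- convergence: `|𝓕_B| (2r+1) n ≤ 10 B² (2r+1) n ≤ s n`
  have hdeg : 3 + (zeroSet Psi).card * (2 * p + r.den * q) ≤ (s + 1) * (r.den * q + 1) := by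
    have h1 : (3 : ℝ) + (zeroSet Psi).card * (2 * p + (r.den * q : ℕ)) ≤
        (s + 1) * ((r.den * q : ℕ) + 1) := by
      set n : ℝ := ((r.den * q : ℕ) : ℝ)
      have h2 : ((zeroSet Psi).card : ℝ) * (2 * p + n) ≤ s * n := by
        rw [hpr, show 2 * ((r : ℝ) * n) + n = (2 * r + 1) * n by ring, ← mul_assoc]
        refine mul_le_mul_of_nonneg_right ?_ (by linarith)
        nlinarith
      have h3 : (1 : ℝ) ≤ s := by nlinarith
      linarith
    exact_mod_cast h1
  have key := hn p _ hpr rfl hdeg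
  have t1 := tsum_Rfun (s := s) (fun θ hθ => (hF θ hθ).1) hp hp0 hpr h1F
  have t2 := tsum_Rfun (s := s) (fun θ hθ => (hF θ hθ).1) hp hp0 hpr hθ
  rw [Rat.cast_one] at t1
  rw [Real.dist_eq, t1, t2,
    mul_div_mul_left _ _ (prefactor_ne_zero (fun b hb => (hPsi' b hb).1) r s _)]
  exact key.trans_lt hηε

end
end

section
/- For every ε > 0 there exists D₀ such that for every integer D ≥ D₀ and all pairwise distinct positive integers b₁, b₂, …, b_D, one has ∏_{i=1}^{D} b_i^{φ(b_i)} ≥ exp((½·ζ(6)/(ζ(2)ζ(3)) − ε)·D²·log D). -/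
/-!
Write `A = ζ(2)ζ(3)/ζ(6)`. The heart of the matter is the upper bound
`#{n : φ(n) ≤ T} ≤ (A + o(1)) T` (`exists_card_totient_le`). By the layer-cake formula it forces
`∑_{n ∈ S} φ(n) ≥ (1/(2A) - o(1)) |S|²` for every finite set `S` of positive integers
(`exists_sum_totient_ge`). In a set of `D` positive integers at most `D^(1-δ)` elements are
`≤ D^(1-δ)`, and all others have `log n ≥ (1-δ) log D`, so that
`∑ φ(n) log n ≥ (1/(2A) - o(1)) D² log D`, which is the claim after taking logarithms.

For the counting bound, fix large constants `K` and `y` and split the `n` with `φ(n) ≤ T`.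

* If `n > K T`, then `n/φ(n) ≥ n/T`. As `n/φ(n) ≤ 2 ∑_{d ∣ n} 1/d` has bounded second moment, there
  are only `O(T/K)` such `n` (`exists_card_large_le`).
* If `n ≤ K T` and `∑_{p ∣ n, p ≥ y} 1/p > δ`, Markov's inequality gives `O(K T/(δ y))` such `n`
  (`card_tail_le`).
* Otherwise `φ(n) ≥ (1-δ) n f(n)` with `f(n) = ∏_{p ∣ n, p < y} (1 - 1/p)`, so `n f(n) ≤ T/(1-δ)`.
  Since `f` is periodic, the number of these `n` is at most `T/(1-δ)` times the mean value of `1/f`,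
  up to `O(1)` (`card_smallPart_le`). That mean is `∏_{p < y} (1 + 1/(p(p-1)))`, which tends to `A`
  because `1 + 1/(p(p-1)) = (1 - p⁻⁶) / ((1 - p⁻²)(1 - p⁻³))` (`tendsto_meanProd`).
-/

open Finset Real

/-- The real value of the Riemann zeta function at a natural number argument. -/
noncomputable def zetaR (k : ℕ) : ℝ := (riemannZeta k).re

/-! ### The part of `φ(n)/n` coming from small primes -/

/-- The product of the primes below `y`. -/
def primorialBelow (y : ℕ) : ℕ := ∏ p ∈ y.primesBelow, p

lemma primorialBelow_pos (y : ℕ) : 0 < primorialBelow y :=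
  prod_pos fun _ hp => (Nat.prime_of_mem_primesBelow hp).pos

/-- The truncated Euler product `∏ (1 - 1/p)` over the primes `p < y` dividing `n`; it depends only
on `n` modulo `∏_{p < y} p`, and tends to `φ(n)/n` as `y` grows. -/
noncomputable def smallPart (y n : ℕ) : ℝ :=
  ∏ p ∈ y.primesBelow with p ∣ n, (1 - (p : ℝ)⁻¹)

/-- The mean value of `1 / smallPart y`, as an Euler product. Its factors are
`1 + 1/(p(p-1))`. -/
noncomputable def meanProd (y : ℕ) : ℝ :=
  ∏ p ∈ y.primesBelow, (1 + ((p : ℝ) - 1)⁻¹ * (p : ℝ)⁻¹)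

lemma one_sub_sum_le_prod_one_sub (s : Finset ℕ) (f : ℕ → ℝ)
    (h : ∀ i ∈ s, 0 ≤ f i ∧ f i ≤ 1) : 1 - ∑ i ∈ s, f i ≤ ∏ i ∈ s, (1 - f i) := by
  suffices H : 1 - ∑ i ∈ s, f i ≤ ∏ i ∈ s, (1 - f i) ∧ ∏ i ∈ s, (1 - f i) ≤ 1 from H.1
  induction s using Finset.induction_on with
  | empty => simp
  | insert a s ha ih =>
    obtain ⟨h1, h2⟩ := ih fun i hi => h i (mem_insert_of_mem hi)
    obtain ⟨h3, h4⟩ := h a (mem_insert_self a s)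
    have h5 : 0 ≤ ∏ i ∈ s, (1 - f i) :=
      prod_nonneg fun i hi => sub_nonneg.2 (h i (mem_insert_of_mem hi)).2
    rw [sum_insert ha, prod_insert ha]
    constructor <;> nlinarith

lemma prime_inv_le_half {p : ℕ} (hp : p.Prime) : (p : ℝ)⁻¹ ≤ 1 / 2 := by
  have : (2 : ℝ) ≤ p := by exact_mod_cast hp.two_le
  rw [one_div]
  gcongr

lemma smallPart_pos (y n : ℕ) : 0 < smallPart y n := by
  refine prod_pos fun p hp => ?_
  have := prime_inv_le_half (Nat.prime_of_mem_primesBelow (mem_filter.1 hp).1)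
  linarith

lemma totient_eq_real (n : ℕ) :
    (n.totient : ℝ) = n * ∏ p ∈ n.primeFactors, (1 - (p : ℝ)⁻¹) := by
  have h := congrArg (fun q : ℚ => (q : ℝ)) (Nat.totient_eq_mul_prod_factors n)
  push_cast at h
  exact h

/-- Bounds `∏ (1 - 1/p)` over the prime factors `p ≥ y` of `n` from below by `1 - ∑ 1/p`. -/
lemma le_totient (y n : ℕ) (hn : 0 < n) :
    n * smallPart y n * (1 - ∑ p ∈ n.primeFactors with y ≤ p, (p : ℝ)⁻¹) ≤ n.totient := by
  rw [totient_eq_real, mul_assoc]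
  have h1 : smallPart y n = ∏ p ∈ n.primeFactors with ¬ y ≤ p, (1 - (p : ℝ)⁻¹) := by
    unfold smallPart
    refine prod_congr ?_ fun _ _ => rfl
    ext p
    simp only [mem_filter, Nat.mem_primesBelow, Nat.mem_primeFactors]
    constructor
    · rintro ⟨⟨a, b⟩, c⟩
      exact ⟨⟨b, c, hn.ne'⟩, by omega⟩
    · rintro ⟨⟨a, b, c⟩, d⟩
      exact ⟨⟨by omega, a⟩, b⟩
  rw [← prod_filter_mul_prod_filter_not n.primeFactors (fun p => y ≤ p), ← h1,
    mul_comm (∏ p ∈ n.primeFactors with y ≤ p, (1 - (p : ℝ)⁻¹))]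
  have := (smallPart_pos y n).le
  gcongr
  refine one_sub_sum_le_prod_one_sub _ _ fun p hp => ⟨by positivity, ?_⟩
  have := prime_inv_le_half (Nat.prime_of_mem_primeFactors (mem_filter.1 hp).1)
  linarith

lemma smallPart_mod (y n : ℕ) : smallPart y (n % primorialBelow y) = smallPart y n := by
  unfold smallPart
  refine prod_congr (filter_congr fun p hp => ?_) fun _ _ => rfl
  exact Nat.dvd_mod_iff (dvd_prod_of_mem (fun p => p) hp)

lemma card_range_dvd_le (P d : ℕ) (hd : d ∣ P) (hP : 0 < P) :
    (#{r ∈ range P | d ∣ r} : ℝ) ≤ P * (d : ℝ)⁻¹ := by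
  obtain ⟨m, rfl⟩ := hd
  have hd0 : 0 < d := Nat.pos_of_mul_pos_right hP
  have h : #{r ∈ range (d * m) | d ∣ r} ≤ m := by
    calc _ ≤ #((range m).image (d * ·)) := by
          refine card_le_card fun r hr => ?_
          simp only [mem_filter, mem_range] at hr
          obtain ⟨h1, k, rfl⟩ := hr
          exact mem_image.2 ⟨k, mem_range.2 (Nat.lt_of_mul_lt_mul_left h1), rfl⟩
      _ ≤ #(range m) := card_image_le
      _ = m := card_range m
  have hd1 : (d : ℝ) ≠ 0 := by positivity
  push_cast
  field_simp
  exact_mod_cast h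

/-- Expansion of `1 / smallPart y` over squarefree divisors `∏ p ∈ s, p` built from the primes
below `y`. -/
lemma inv_smallPart (y r : ℕ) : (smallPart y r)⁻¹ =
    ∑ s ∈ y.primesBelow.powerset, if ∏ p ∈ s, p ∣ r then ∏ p ∈ s, ((p : ℝ) - 1)⁻¹ else 0 := by
  have h1 : (smallPart y r)⁻¹ =
      ∏ p ∈ y.primesBelow, (1 + if p ∣ r then ((p : ℝ) - 1)⁻¹ else 0) := by
    unfold smallPart
    rw [← prod_inv_distrib, prod_filter]
    refine prod_congr rfl fun p hp => ?_
    split_ifs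
    · have : (2 : ℝ) ≤ p := by exact_mod_cast (Nat.prime_of_mem_primesBelow hp).two_le
      have h2 : (p : ℝ) - 1 ≠ 0 := by linarith
      have h3 : (p : ℝ) ≠ 0 := by linarith
      field_simp
      ring
    · simp
  rw [h1, Finset.prod_one_add]
  refine sum_congr rfl fun s hs => ?_
  rw [Finset.prod_ite_zero]
  refine if_congr ⟨fun h => ?_, fun h p hp => (dvd_prod_of_mem _ hp).trans h⟩ rfl rfl
  exact prod_primes_dvd r (fun p hp =>
    (Nat.prime_of_mem_primesBelow (mem_powerset.1 hs hp)).prime) h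

lemma sum_inv_smallPart_le (y : ℕ) :
    ∑ r ∈ range (primorialBelow y), (smallPart y r)⁻¹ ≤ primorialBelow y * meanProd y := by
  simp_rw [inv_smallPart]
  rw [sum_comm, meanProd, Finset.prod_one_add, mul_sum]
  refine sum_le_sum fun s hs => ?_
  rw [← sum_filter, sum_const, nsmul_eq_mul, prod_mul_distrib]
  have h := card_range_dvd_le (primorialBelow y) (∏ p ∈ s, p)
    (prod_dvd_prod_of_subset _ _ _ (mem_powerset.1 hs)) (primorialBelow_pos y)
  have h2 : 0 ≤ ∏ p ∈ s, ((p : ℝ) - 1)⁻¹ := by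
    refine prod_nonneg fun p hp => inv_nonneg.2 ?_
    have : (2 : ℝ) ≤ p := by
      exact_mod_cast (Nat.prime_of_mem_primesBelow (mem_powerset.1 hs hp)).two_le
    linarith
  calc _ ≤ (primorialBelow y * ((∏ p ∈ s, p : ℕ) : ℝ)⁻¹) * ∏ p ∈ s, ((p : ℝ) - 1)⁻¹ := by gcongr
    _ = _ := by rw [prod_inv_distrib (fun p : ℕ => (p : ℝ))]; push_cast; ring

/-- Since `smallPart y` is periodic, the solutions of `n * smallPart y n ≤ X` are counted
residue class by residue class. -/
lemma card_smallPart_le (y : ℕ) (X : ℝ) (hX : 0 ≤ X) (S : Finset ℕ)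
    (hS : ∀ n ∈ S, n * smallPart y n ≤ X) : (#S : ℝ) ≤ X * meanProd y + primorialBelow y := by
  set P := primorialBelow y with hP
  have hP0 : 0 < P := primorialBelow_pos y
  have hPr : (0 : ℝ) < P := by exact_mod_cast hP0
  have h1 : #S = ∑ r ∈ range P, #{n ∈ S | n % P = r} :=
    card_eq_sum_card_fiberwise fun n _ => by simpa using Nat.mod_lt n hP0
  have h2 : ∀ r ∈ range P, (#{n ∈ S | n % P = r} : ℝ) ≤ X / P * (smallPart y r)⁻¹ + 1 := by
    intro r _
    have hr := smallPart_pos y r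
    have h3 : #{n ∈ S | n % P = r} ≤ #(range (⌊X / P * (smallPart y r)⁻¹⌋₊ + 1)) := by
      refine card_le_card_of_injOn (fun n => n / P) ?_ ?_
      · intro n hn
        simp only [coe_filter, Set.mem_ofPred_eq] at hn
        simp only [coe_range, Set.mem_Iio]
        refine Nat.lt_succ_of_le (Nat.le_floor ?_)
        have h4 := hS n hn.1
        rw [← smallPart_mod, ← hP, hn.2] at h4
        have h5 : ((n / P : ℕ) : ℝ) ≤ n / P := Nat.cast_div_le
        refine h5.trans ?_
        rw [div_mul_eq_mul_div]
        gcongr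
        rwa [← div_eq_mul_inv, le_div_iff₀ hr]
      · intro a ha b hb hab
        simp only [coe_filter, Set.mem_ofPred_eq] at ha hb
        have := Nat.div_add_mod a P
        have := Nat.div_add_mod b P
        simp only at hab
        rw [hab] at *
        omega
    rw [card_range] at h3
    calc (#{n ∈ S | n % P = r} : ℝ) ≤ ⌊X / P * (smallPart y r)⁻¹⌋₊ + 1 := by exact_mod_cast h3
      _ ≤ _ := by gcongr; exact Nat.floor_le (by positivity)
  rw [h1]
  push_cast
  calc _ ≤ ∑ r ∈ range P, (X / P * (smallPart y r)⁻¹ + 1) := sum_le_sum h2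
    _ = X / P * ∑ r ∈ range P, (smallPart y r)⁻¹ + P := by
      rw [sum_add_distrib, ← mul_sum]; simp
    _ ≤ X / P * (P * meanProd y) + P := by
      gcongr; exact sum_inv_smallPart_le y
    _ = _ := by field_simp

/-! ### Euler products -/

lemma tendsto_zetaR (k : ℕ) (hk : 1 < k) :
    Filter.Tendsto (fun n : ℕ => ∏ p ∈ n.primesBelow, (1 - ((p : ℝ) ^ k)⁻¹)⁻¹)
      Filter.atTop (nhds (zetaR k)) := by
  have h := riemannZeta_eulerProduct (s := (k : ℂ)) (by simpa using hk)
  refine ((Complex.continuous_re.tendsto _).comp h).congr fun n => ?_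
  rw [Function.comp_apply, ← Complex.ofReal_re (∏ p ∈ n.primesBelow, (1 - ((p : ℝ) ^ k)⁻¹)⁻¹)]
  congr 1
  push_cast
  refine prod_congr rfl fun p _ => ?_
  rw [Complex.cpow_neg, Complex.cpow_natCast]

lemma one_le_zetaR (k : ℕ) (hk : 1 < k) : 1 ≤ zetaR k := by
  refine ge_of_tendsto' (tendsto_zetaR k hk) fun n => ?_
  refine Finset.one_le_prod fun p hp => ?_
  have h2 : (2 : ℝ) ≤ p := by exact_mod_cast (Nat.prime_of_mem_primesBelow hp).two_le
  have h3 : ((p : ℝ) ^ k)⁻¹ < 1 := inv_lt_one_of_one_lt₀ (one_lt_pow₀ (by linarith) (by omega))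
  refine (one_le_inv₀ (by linarith)).2 ?_
  have : 0 ≤ ((p : ℝ) ^ k)⁻¹ := by positivity
  linarith

lemma tendsto_meanProd : Filter.Tendsto meanProd Filter.atTop
    (nhds (zetaR 2 * zetaR 3 / zetaR 6)) := by
  have h6 : zetaR 6 ≠ 0 := by linarith [one_le_zetaR 6 (by norm_num)]
  refine (((tendsto_zetaR 2 (by norm_num)).mul (tendsto_zetaR 3 (by norm_num))).div
    (tendsto_zetaR 6 (by norm_num)) h6).congr fun n => ?_
  rw [Pi.div_apply, ← prod_mul_distrib, ← prod_div_distrib, meanProd]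
  refine prod_congr rfl fun p hp => ?_
  have h2 : (2 : ℝ) ≤ p := by exact_mod_cast (Nat.prime_of_mem_primesBelow hp).two_le
  have h0 : (p : ℝ) ≠ 0 := by linarith
  have h1 : (p : ℝ) - 1 ≠ 0 := by linarith
  have k2 : (p : ℝ) ^ 2 - 1 ≠ 0 := by nlinarith
  have k3 : (p : ℝ) ^ 3 - 1 ≠ 0 := by
    have : (p : ℝ) ^ 3 - 1 = (p - 1) * (p ^ 2 + p + 1) := by ring
    rw [this]; positivity
  have k6 : (p : ℝ) ^ 6 - 1 ≠ 0 := by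
    have : (p : ℝ) ^ 6 - 1 = (p ^ 3 - 1) * (p ^ 3 + 1) := by ring
    rw [this]; positivity
  field_simp
  ring

/-! ### Large integers with small totient -/

/-- The telescoping product `∏ (1 - 1/k²) > 1/2` over `k ≥ 2`. -/
lemma half_le_prod (s : Finset ℕ) (hs : ∀ k ∈ s, 2 ≤ k) :
    (1 / 2 : ℝ) ≤ ∏ k ∈ s, (1 - ((k : ℝ)⁻¹) ^ 2) := by
  have key : ∀ N : ℕ, ∏ k ∈ Ico 2 (N + 2), (1 - ((k : ℝ)⁻¹) ^ 2) = ((N : ℝ) + 2) / (2 * (N + 1)) := by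
    intro N
    induction N with
    | zero => norm_num
    | succ N ih =>
      rw [show N + 1 + 2 = (N + 2) + 1 by ring, prod_Ico_succ_top (by omega), ih]
      push_cast
      field_simp
      ring
  have hsub : s ⊆ Ico 2 (s.sup id + 2) := fun k hk => by
    have h1 := hs k hk
    have h2 : k ≤ s.sup id := le_sup (f := id) hk
    rw [mem_Ico]; omega
  have h01 : ∀ k ∈ Ico 2 (s.sup id + 2), 0 ≤ 1 - ((k : ℝ)⁻¹) ^ 2 := fun k hk => by
    have h2 : (2 : ℝ) ≤ k := by exact_mod_cast (mem_Ico.1 hk).1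
    have : (k : ℝ)⁻¹ ≤ 1 := inv_le_one_of_one_le₀ (by linarith)
    have : 0 ≤ (k : ℝ)⁻¹ := by positivity
    nlinarith
  calc (1 / 2 : ℝ) ≤ ∏ k ∈ Ico 2 (s.sup id + 2), (1 - ((k : ℝ)⁻¹) ^ 2) := by
        rw [key, div_le_div_iff₀ (by norm_num) (by positivity)]; linarith
    _ ≤ _ := by
      rw [← prod_sdiff hsub]
      refine mul_le_of_le_one_left (prod_nonneg fun k hk => h01 k (hsub hk)) ?_
      refine prod_le_one (fun k hk => h01 k (sdiff_subset hk)) fun k _ => ?_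
      have : 0 ≤ ((k : ℝ)⁻¹) ^ 2 := by positivity
      linarith

lemma prod_one_add_le (n : ℕ) (hn : 0 < n) :
    ∏ p ∈ n.primeFactors, (1 + (p : ℝ)⁻¹) ≤ ∑ d ∈ n.divisors, (d : ℝ)⁻¹ := by
  rw [Finset.prod_one_add]
  have hinj : Set.InjOn (fun s : Finset ℕ => ∏ p ∈ s, p) (n.primeFactors.powerset : Set _) := by
    intro s hs t ht hst
    simp only [coe_powerset, Set.mem_preimage, Set.mem_powerset_iff, coe_subset] at hs ht
    have h1 := Nat.primeFactors_prod fun p hp => Nat.prime_of_mem_primeFactors (hs hp)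
    have h2 := Nat.primeFactors_prod fun p hp => Nat.prime_of_mem_primeFactors (ht hp)
    simp only at hst
    rw [← h1, ← h2, hst]
  calc _ = ∑ d ∈ n.primeFactors.powerset.image (fun s : Finset ℕ => ∏ p ∈ s, p), (d : ℝ)⁻¹ := by
        rw [sum_image hinj]
        refine sum_congr rfl fun s _ => ?_
        push_cast
        rw [prod_inv_distrib]
    _ ≤ _ := by
      refine sum_le_sum_of_subset_of_nonneg ?_ fun _ _ _ => by positivity
      intro d hd
      obtain ⟨s, hs, rfl⟩ := mem_image.1 hd
      exact Nat.mem_divisors.2 ⟨(prod_dvd_prod_of_subset _ _ _ (mem_powerset.1 hs)).trans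
        (Nat.prod_primeFactors_dvd n), Nat.ne_of_gt hn⟩

/-- `n/φ(n) ≤ 2 ∑_{d ∣ n} 1/d`, because `∏_{p ∣ n} (1 - 1/p²) ≥ 1/2`. -/
lemma le_two_mul_totient (n : ℕ) (hn : 0 < n) :
    (n : ℝ) ≤ 2 * n.totient * ∑ d ∈ n.divisors, (d : ℝ)⁻¹ := by
  have h1 := half_le_prod n.primeFactors fun p hp => (Nat.prime_of_mem_primeFactors hp).two_le
  have h2 := prod_one_add_le n hn
  have h3 : ∏ p ∈ n.primeFactors, (1 - ((p : ℝ)⁻¹) ^ 2) =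
      (∏ p ∈ n.primeFactors, (1 - (p : ℝ)⁻¹)) * ∏ p ∈ n.primeFactors, (1 + (p : ℝ)⁻¹) := by
    rw [← prod_mul_distrib]
    exact prod_congr rfl fun _ _ => by ring
  rw [h3] at h1
  calc (n : ℝ) = 2 * n * (1 / 2) := by ring
    _ ≤ 2 * n * ((∏ p ∈ n.primeFactors, (1 - (p : ℝ)⁻¹)) *
        ∏ p ∈ n.primeFactors, (1 + (p : ℝ)⁻¹)) := by gcongr
    _ = 2 * n.totient * ∏ p ∈ n.primeFactors, (1 + (p : ℝ)⁻¹) := by rw [totient_eq_real]; ring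
    _ ≤ _ := by gcongr

/-- A constant bounding all the finite sums `∑ d^(-3/2)`. -/
lemma exists_zeta_bound : ∃ C : ℝ, 0 < C ∧
    ∀ s : Finset ℕ, ∑ d ∈ s, ((d : ℝ) ^ (3 / 2 : ℝ))⁻¹ ≤ C := by
  have h := Real.summable_nat_rpow_inv.2 (by norm_num : (1 : ℝ) < 3 / 2)
  have h0 : ∀ d : ℕ, 0 ≤ ((d : ℝ) ^ (3 / 2 : ℝ))⁻¹ := fun d => by positivity
  refine ⟨∑' d : ℕ, ((d : ℝ) ^ (3 / 2 : ℝ))⁻¹ + 1, ?_, fun s => ?_⟩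
  · have := tsum_nonneg (L := .unconditional _) h0
    linarith
  · have := h.sum_le_tsum s fun d _ => h0 d
    linarith

lemma sum_multiples_inv_sq_le (S : Finset ℕ) (N d : ℕ) (hN : 0 < N) (hd : 0 < d)
    (hS : ∀ n ∈ S, N < n) : ∑ n ∈ S with d ∣ n, ((n : ℝ) ^ 2)⁻¹ ≤ 2 / (d * N) := by
  set M := S.sup id + 1
  have hsub : {n ∈ S | d ∣ n} ⊆ (Ioo (N / d) M).image (d * ·) := by
    intro n hn
    obtain ⟨h1, m, rfl⟩ := mem_filter.1 hn
    refine mem_image.2 ⟨m, mem_Ioo.2 ⟨?_, ?_⟩, rfl⟩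
    · exact (Nat.div_lt_iff_lt_mul hd).2 (by rw [mul_comm]; exact hS _ h1)
    · have h2 : d * m ≤ S.sup id := le_sup (f := id) h1
      have : m ≤ d * m := Nat.le_mul_of_pos_left m hd
      omega
  have hdr : (0 : ℝ) < d := by exact_mod_cast hd
  have hNr : (0 : ℝ) < N := by exact_mod_cast hN
  calc _ ≤ ∑ n ∈ (Ioo (N / d) M).image (d * ·), ((n : ℝ) ^ 2)⁻¹ :=
        sum_le_sum_of_subset_of_nonneg hsub fun _ _ _ => by positivity
    _ = ∑ m ∈ Ioo (N / d) M, ((d : ℝ) ^ 2)⁻¹ * ((m : ℝ) ^ 2)⁻¹ := by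
      rw [sum_image fun a _ b _ hab => Nat.eq_of_mul_eq_mul_left hd hab]
      refine sum_congr rfl fun m _ => ?_
      push_cast
      rw [mul_pow, mul_inv]
    _ ≤ ((d : ℝ) ^ 2)⁻¹ * (2 / ((N / d : ℕ) + 1)) := by
      rw [← mul_sum]
      gcongr
      exact sum_Ioo_inv_sq_le _ _
    _ ≤ ((d : ℝ) ^ 2)⁻¹ * (2 / (N / d)) := by
      gcongr
      rw [div_le_iff₀ hdr]
      exact_mod_cast (Nat.lt_mul_of_div_lt (Nat.lt_succ_self (N / d)) hd).le
    _ = _ := by field_simp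

/-- Rankin's trick with a second moment: there are at most `O(T / K)` integers `n > K T` with
`φ(n) ≤ T`, since each of them has `n / φ(n) ≥ n / T`. -/
lemma exists_card_large_le : ∃ C : ℝ, 0 < C ∧ ∀ (K T : ℕ) (S : Finset ℕ), 0 < K → 0 < T →
    (∀ n ∈ S, K * T < n ∧ n.totient ≤ T) → (#S : ℝ) ≤ C * T / K := by
  obtain ⟨C, hC, hCs⟩ := exists_zeta_bound
  refine ⟨8 * C ^ 2, by positivity, fun K T S hK hT hS => ?_⟩
  have hTr : (0 : ℝ) < T := by exact_mod_cast hT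
  have hKr : (0 : ℝ) < K := by exact_mod_cast hK
  have hpos : ∀ n ∈ S, 0 < n := fun n hn => Nat.zero_lt_of_lt (hS n hn).1
  -- Cauchy–Schwarz with the splitting `d⁻¹ = d^(-3/4) * d^(-1/4)`
  have hcs : ∀ n : ℕ, (∑ d ∈ n.divisors, (d : ℝ)⁻¹) ^ 2 ≤
      C * ∑ d ∈ n.divisors, ((d : ℝ) ^ (1 / 2 : ℝ))⁻¹ := by
    intro n
    have h := sum_mul_sq_le_sq_mul_sq n.divisors (fun d : ℕ => ((d : ℝ) ^ (3 / 4 : ℝ))⁻¹)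
      (fun d : ℕ => ((d : ℝ) ^ (1 / 4 : ℝ))⁻¹)
    have e1 : ∀ d ∈ n.divisors, ((d : ℝ) ^ (3 / 4 : ℝ))⁻¹ * ((d : ℝ) ^ (1 / 4 : ℝ))⁻¹
        = (d : ℝ)⁻¹ := fun d hd => by
      have : (0 : ℝ) < d := by exact_mod_cast Nat.pos_of_mem_divisors hd
      rw [← mul_inv, ← Real.rpow_add this]; norm_num
    have e2 : ∀ d ∈ n.divisors, (((d : ℝ) ^ (3 / 4 : ℝ))⁻¹) ^ 2 = ((d : ℝ) ^ (3 / 2 : ℝ))⁻¹ :=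
      fun d hd => by
        rw [inv_pow, ← Real.rpow_mul_natCast (by positivity)]; norm_num
    have e3 : ∀ d ∈ n.divisors, (((d : ℝ) ^ (1 / 4 : ℝ))⁻¹) ^ 2 = ((d : ℝ) ^ (1 / 2 : ℝ))⁻¹ :=
      fun d hd => by
        rw [inv_pow, ← Real.rpow_mul_natCast (by positivity)]; norm_num
    rw [sum_congr rfl e1, sum_congr rfl e2, sum_congr rfl e3] at h
    exact h.trans (mul_le_mul_of_nonneg_right (hCs _) (sum_nonneg fun _ _ => by positivity))
  have hone : ∀ n ∈ S, (1 : ℝ) ≤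
      4 * T ^ 2 * C * (((n : ℝ) ^ 2)⁻¹ * ∑ d ∈ n.divisors, ((d : ℝ) ^ (1 / 2 : ℝ))⁻¹) := by
    intro n hn
    have hn0 : (0 : ℝ) < n := by exact_mod_cast hpos n hn
    have h1 : (n : ℝ) ≤ 2 * T * ∑ d ∈ n.divisors, (d : ℝ)⁻¹ := by
      refine (le_two_mul_totient n (hpos n hn)).trans ?_
      have : (n.totient : ℝ) ≤ T := by exact_mod_cast (hS n hn).2
      gcongr
    have h2 : (n : ℝ) ^ 2 ≤ 4 * T ^ 2 * (C * ∑ d ∈ n.divisors, ((d : ℝ) ^ (1 / 2 : ℝ))⁻¹) :=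
      calc (n : ℝ) ^ 2 ≤ (2 * T * ∑ d ∈ n.divisors, (d : ℝ)⁻¹) ^ 2 := by gcongr
        _ = 4 * T ^ 2 * (∑ d ∈ n.divisors, (d : ℝ)⁻¹) ^ 2 := by ring
        _ ≤ _ := by gcongr; exact hcs n
    calc (1 : ℝ) = ((n : ℝ) ^ 2)⁻¹ * (n : ℝ) ^ 2 := by field_simp
      _ ≤ ((n : ℝ) ^ 2)⁻¹ * (4 * T ^ 2 * (C * ∑ d ∈ n.divisors, ((d : ℝ) ^ (1 / 2 : ℝ))⁻¹)) := by
        gcongr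
      _ = _ := by ring
  set M := S.sup id
  have hswap : ∑ n ∈ S, (((n : ℝ) ^ 2)⁻¹ * ∑ d ∈ n.divisors, ((d : ℝ) ^ (1 / 2 : ℝ))⁻¹) =
      ∑ d ∈ Ioc 0 M, ((d : ℝ) ^ (1 / 2 : ℝ))⁻¹ * ∑ n ∈ S with d ∣ n, ((n : ℝ) ^ 2)⁻¹ := by
    simp_rw [mul_sum]
    rw [sum_comm' (t' := Ioc 0 M) (s' := fun d => {n ∈ S | d ∣ n})]
    · exact sum_congr rfl fun _ _ => sum_congr rfl fun _ _ => mul_comm _ _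
    · intro n d
      simp only [Nat.mem_divisors, mem_filter, mem_Ioc]
      constructor
      · rintro ⟨h1, h2, h3⟩
        have h4 : n ≤ M := le_sup (f := id) h1
        exact ⟨⟨h1, h2⟩, Nat.pos_of_dvd_of_pos h2 (hpos n h1),
          (Nat.le_of_dvd (hpos n h1) h2).trans h4⟩
      · rintro ⟨⟨h1, h2⟩, _⟩
        exact ⟨h1, h2, (hpos n h1).ne'⟩
  have hbound : ∑ d ∈ Ioc 0 M, ((d : ℝ) ^ (1 / 2 : ℝ))⁻¹ * ∑ n ∈ S with d ∣ n, ((n : ℝ) ^ 2)⁻¹ ≤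
      2 / (K * T) * C := by
    calc _ ≤ ∑ d ∈ Ioc 0 M, 2 / (K * T) * ((d : ℝ) ^ (3 / 2 : ℝ))⁻¹ := by
          refine sum_le_sum fun d hd => ?_
          have hd0 := (mem_Ioc.1 hd).1
          have hdr : (0 : ℝ) < d := by exact_mod_cast hd0
          have h := sum_multiples_inv_sq_le S (K * T) d (Nat.mul_pos hK hT) hd0
            fun n hn => (hS n hn).1
          have e : (d : ℝ) ^ (3 / 2 : ℝ) = (d : ℝ) ^ (1 / 2 : ℝ) * d := by
            rw [← Real.rpow_add_one hdr.ne']; norm_num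
          calc _ ≤ ((d : ℝ) ^ (1 / 2 : ℝ))⁻¹ * (2 / (d * (K * T : ℕ))) := by gcongr
            _ = _ := by
              rw [e]; push_cast; field_simp
      _ ≤ _ := by
        rw [← mul_sum]
        gcongr
        exact hCs _
  calc (#S : ℝ) = ∑ n ∈ S, (1 : ℝ) := by simp
    _ ≤ ∑ n ∈ S, 4 * T ^ 2 * C *
        (((n : ℝ) ^ 2)⁻¹ * ∑ d ∈ n.divisors, ((d : ℝ) ^ (1 / 2 : ℝ))⁻¹) := sum_le_sum hone
    _ ≤ 4 * T ^ 2 * C * (2 / (K * T) * C) := by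
      rw [← mul_sum, hswap]
      gcongr
    _ = _ := by field_simp; ring

/-! ### Integers with many large prime factors -/

/-- Markov's inequality: few `n ≤ Z` have a large sum `∑ 1/p` over prime factors `p ≥ y`, as the
mean of that sum is at most `∑_{p ≥ y} 1/p² ≤ 2/y`. -/
lemma card_tail_le (y Z : ℕ) (hy : 0 < y) (δ : ℝ) (hδ : 0 < δ) (S : Finset ℕ)
    (hS : ∀ n ∈ S, 0 < n ∧ n ≤ Z ∧ δ < ∑ p ∈ n.primeFactors with y ≤ p, (p : ℝ)⁻¹) :
    (#S : ℝ) ≤ 2 * Z / (y * δ) := by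
  have hyr : (0 : ℝ) < y := by exact_mod_cast hy
  rw [le_div_iff₀ (by positivity)]
  have h1 : (#S : ℝ) * δ ≤ Z * (2 / y) := by
    calc (#S : ℝ) * δ = ∑ n ∈ S, δ := by simp
      _ ≤ ∑ n ∈ S, ∑ p ∈ n.primeFactors with y ≤ p, (p : ℝ)⁻¹ :=
        sum_le_sum fun n hn => (hS n hn).2.2.le
      _ ≤ ∑ n ∈ Ioc 0 Z, ∑ p ∈ Ioo (y - 1) (Z + 1) with p ∣ n, (p : ℝ)⁻¹ := by
        refine (sum_le_sum_of_subset_of_nonneg (t := Ioc 0 Z)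
          (fun n hn => mem_Ioc.2 ⟨(hS n hn).1, (hS n hn).2.1⟩)
          fun _ _ _ => sum_nonneg fun _ _ => by positivity).trans ?_
        refine sum_le_sum fun n hn => ?_
        refine sum_le_sum_of_subset_of_nonneg (fun p hp => ?_) fun _ _ _ => by positivity
        obtain ⟨h1, h2⟩ := mem_filter.1 hp
        have h3 := Nat.dvd_of_mem_primeFactors h1
        have h4 := Nat.le_of_dvd (mem_Ioc.1 hn).1 h3
        have h5 := (mem_Ioc.1 hn).2
        exact mem_filter.2 ⟨mem_Ioo.2 (by omega), h3⟩
      _ = ∑ p ∈ Ioo (y - 1) (Z + 1), ((Z / p : ℕ) : ℝ) * (p : ℝ)⁻¹ := by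
        simp_rw [sum_filter]
        rw [sum_comm]
        refine sum_congr rfl fun p _ => ?_
        rw [← sum_filter, sum_const, nsmul_eq_mul, Nat.Ioc_filter_dvd_card_eq_div]
      _ ≤ ∑ p ∈ Ioo (y - 1) (Z + 1), (Z : ℝ) * ((p : ℝ) ^ 2)⁻¹ := by
        refine sum_le_sum fun p _ => ?_
        calc ((Z / p : ℕ) : ℝ) * (p : ℝ)⁻¹ ≤ (Z / p : ℝ) * (p : ℝ)⁻¹ := by
              gcongr; exact Nat.cast_div_le
          _ = _ := by rw [div_eq_mul_inv, sq, mul_inv, mul_assoc]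
      _ ≤ Z * (2 / (((y - 1 : ℕ) : ℝ) + 1)) := by
        rw [← mul_sum]
        gcongr
        exact sum_Ioo_inv_sq_le _ _
      _ = Z * (2 / y) := by rw [Nat.cast_sub hy]; simp
  calc (#S : ℝ) * (y * δ) = (#S * δ) * y := by ring
    _ ≤ Z * (2 / y) * y := by gcongr
    _ = _ := by field_simp

/-! ### Counting by the value of Euler's function -/

/-- `ζ(2)ζ(3)/ζ(6)`, the density of the values of Euler's function counted with multiplicity. -/
noncomputable def totientDensity : ℝ := zetaR 2 * zetaR 3 / zetaR 6

lemma totientDensity_pos : 0 < totientDensity := by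
  have h2 := one_le_zetaR 2 (by norm_num)
  have h3 := one_le_zetaR 3 (by norm_num)
  have h6 := one_le_zetaR 6 (by norm_num)
  unfold totientDensity
  positivity

/-- Upper bound in the asymptotic `#{n : φ(n) ≤ T} ~ (ζ(2)ζ(3)/ζ(6)) T`. -/
lemma exists_card_totient_le (A : ℝ) (hA : totientDensity < A) : ∃ P : ℝ, 0 ≤ P ∧
    ∀ (T : ℕ) (S : Finset ℕ), (∀ n ∈ S, 0 < n ∧ n.totient ≤ T) → (#S : ℝ) ≤ A * T + P := by
  obtain ⟨C, hC, hCS⟩ := exists_card_large_le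
  set B := totientDensity with hB
  have hB0 : 0 < B := totientDensity_pos
  obtain ⟨η, hη⟩ : ∃ η, η = A - B := ⟨_, rfl⟩
  have hη0 : 0 < η := by linarith
  -- chosen so that `1 - δ = (B + η/4) / (B + η/2)`
  obtain ⟨δ, hδ⟩ : ∃ δ, δ = (η / 4) / (B + η / 2) := ⟨_, rfl⟩
  have hδ0 : 0 < δ := by rw [hδ]; positivity
  have hδ1 : (1 - δ) * (B + η / 2) = B + η / 4 := by
    rw [hδ]; field_simp; ring
  have hδ2 : 0 < 1 - δ := by
    by_contra! h
    nlinarith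
  obtain ⟨K, hK⟩ := exists_nat_gt (C / (η / 4))
  have hKr : (0 : ℝ) < K := lt_of_le_of_lt (by positivity) hK
  have hK0 : 0 < K := by exact_mod_cast hKr
  have hCK : C / K ≤ η / 4 := by
    rw [div_lt_iff₀ (by positivity)] at hK
    rw [div_le_iff₀ hKr]
    linarith
  obtain ⟨y₀, hy₀⟩ := exists_nat_gt (2 * K / (δ * (η / 4)))
  obtain ⟨y, hy1, hy2⟩ := ((tendsto_meanProd.eventually_le_const
    (show B < B + η / 4 by linarith)).and (Filter.eventually_ge_atTop y₀)).exists
  have hyr : 2 * K / (δ * (η / 4)) < y := hy₀.trans_le (by exact_mod_cast hy2)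
  have hyr0 : (0 : ℝ) < y := lt_of_le_of_lt (by positivity) hyr
  have hy0 : 0 < y := by exact_mod_cast hyr0
  have hKy : 2 * K / (y * δ) ≤ η / 4 := by
    rw [div_lt_iff₀ (by positivity)] at hyr
    rw [div_le_iff₀ (by positivity)]
    linarith
  refine ⟨primorialBelow y, by positivity, fun T S hS => ?_⟩
  rcases Nat.eq_zero_or_pos T with rfl | hT
  · have : S = ∅ := by
      refine eq_empty_of_forall_notMem fun n hn => ?_
      have := Nat.totient_pos.2 (hS n hn).1
      have := (hS n hn).2
      omega
    simp [this]
  have hTr : (0 : ℝ) < T := by exact_mod_cast hT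
  set S₃ := {n ∈ S | K * T < n}
  set S' := {n ∈ S | ¬ K * T < n}
  set S₂ := {n ∈ S' | δ < ∑ p ∈ n.primeFactors with y ≤ p, (p : ℝ)⁻¹}
  set S₁ := {n ∈ S' | ¬ δ < ∑ p ∈ n.primeFactors with y ≤ p, (p : ℝ)⁻¹}
  have hcard : (#S : ℝ) = #S₃ + (#S₂ + #S₁) := by
    have h1 : #S₃ + #S' = #S := card_filter_add_card_filter_not _
    have h2 : #S₂ + #S₁ = #S' := card_filter_add_card_filter_not _
    rw [← h1, ← h2]
    push_cast
    ring
  have h3 : (#S₃ : ℝ) ≤ η / 4 * T := by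
    calc (#S₃ : ℝ) ≤ C * T / K := hCS K T S₃ hK0 hT fun n hn =>
          ⟨(mem_filter.1 hn).2, (hS n (mem_filter.1 hn).1).2⟩
      _ = C / K * T := by ring
      _ ≤ _ := by gcongr
  have h2 : (#S₂ : ℝ) ≤ η / 4 * T := by
    calc (#S₂ : ℝ) ≤ 2 * (K * T : ℕ) / (y * δ) := by
          refine card_tail_le y (K * T) hy0 δ hδ0 S₂ fun n hn => ?_
          obtain ⟨h, h'⟩ := mem_filter.1 hn
          obtain ⟨h4, h5⟩ := mem_filter.1 h
          exact ⟨(hS n h4).1, not_lt.1 h5, h'⟩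
      _ = 2 * K / (y * δ) * T := by push_cast; ring
      _ ≤ _ := by gcongr
  have h1 : (#S₁ : ℝ) ≤ (B + η / 2) * T + primorialBelow y := by
    calc (#S₁ : ℝ) ≤ T / (1 - δ) * meanProd y + primorialBelow y := by
          refine card_smallPart_le y _ (by positivity) S₁ fun n hn => ?_
          obtain ⟨h, h'⟩ := mem_filter.1 hn
          obtain ⟨h4, h5⟩ := mem_filter.1 h
          obtain ⟨h6, h7⟩ := hS n h4
          rw [le_div_iff₀ hδ2]
          have h8 := smallPart_pos y n
          calc _ ≤ n * smallPart y n * (1 - ∑ p ∈ n.primeFactors with y ≤ p, (p : ℝ)⁻¹) := by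
                gcongr; exact not_lt.1 h'
            _ ≤ n.totient := le_totient y n h6
            _ ≤ T := by exact_mod_cast h7
      _ ≤ T / (1 - δ) * ((1 - δ) * (B + η / 2)) + primorialBelow y := by
        rw [hδ1]; gcongr
      _ = _ := by field_simp
  rw [hcard, show A = B + η by linarith]
  linarith

/-! ### Sums of Euler's function over arbitrary sets -/

/-- The layer-cake formula turns the bound on the counting function of `φ` into a lower bound for
`∑ φ(n)` over an arbitrary finite set. -/
lemma exists_sum_totient_ge (A : ℝ) (hA : totientDensity < A) : ∃ C : ℝ, 0 ≤ C ∧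
    ∀ S : Finset ℕ, (∀ n ∈ S, 0 < n) →
      (#S : ℝ) ^ 2 / (2 * A) - C * #S ≤ ∑ n ∈ S, (n.totient : ℝ) := by
  obtain ⟨P, hP, hPS⟩ := exists_card_totient_le A hA
  have hA0 : 0 < A := totientDensity_pos.trans hA
  refine ⟨A / 2 + P / A, by positivity, fun S hS => ?_⟩
  rcases S.eq_empty_or_nonempty with rfl | hne
  · simp
  have hD1 : (1 : ℝ) ≤ #S := by exact_mod_cast hne.card_pos
  obtain ⟨D, hD⟩ : ∃ D : ℝ, D = #S := ⟨_, rfl⟩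
  rw [← hD] at hD1 ⊢
  obtain ⟨T, hT⟩ : ∃ T : ℕ, T = ⌊D / A⌋₊ := ⟨_, rfl⟩
  have hT1 : (T : ℝ) ≤ D / A := hT ▸ Nat.floor_le (by positivity)
  have hT2 : D / A < T + 1 := hT ▸ Nat.lt_floor_add_one _
  have hlayer : ∑ k ∈ range T, (D - (A * k + P)) ≤ ∑ n ∈ S, (n.totient : ℝ) := by
    calc ∑ k ∈ range T, (D - (A * k + P)) ≤ ∑ k ∈ range T, (#{n ∈ S | k < n.totient} : ℝ) := by
          refine sum_le_sum fun k _ => ?_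
          have h1 := hPS k {n ∈ S | ¬ k < n.totient} fun n hn =>
            ⟨hS n (mem_filter.1 hn).1, not_lt.1 (mem_filter.1 hn).2⟩
          have h2 : #{n ∈ S | k < n.totient} + #{n ∈ S | ¬ k < n.totient} = #S :=
            card_filter_add_card_filter_not _
          have h3 : (#{n ∈ S | k < n.totient} : ℝ) + #{n ∈ S | ¬ k < n.totient} = D := by
            rw [hD]; exact_mod_cast h2
          linarith
      _ = ∑ n ∈ S, (#{k ∈ range T | k < n.totient} : ℝ) := by
        simp_rw [card_filter]
        push_cast
        rw [sum_comm]
      _ ≤ _ := by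
        refine sum_le_sum fun n _ => ?_
        have : {k ∈ range T | k < n.totient} ⊆ range n.totient := fun k hk =>
          mem_range.2 (mem_filter.1 hk).2
        have := card_le_card this
        rw [card_range] at this
        exact_mod_cast this
  have hsum : ∀ T : ℕ, ∑ k ∈ range T, (D - (A * k + P)) = T * (D - P) - A * (T * (T - 1) / 2) := by
    intro T
    induction T with
    | zero => simp
    | succ T ih => rw [sum_range_succ, ih]; push_cast; ring
  rw [hsum] at hlayer
  refine le_trans ?_ hlayer
  -- `T = D/A - θ` with `0 ≤ θ < 1`
  obtain ⟨θ, hθ⟩ : ∃ θ : ℝ, θ = D / A - T := ⟨_, rfl⟩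
  have hDA : D = A * (T + θ) := by rw [hθ]; field_simp; ring
  have hθ0 : 0 ≤ θ := by linarith
  have hθ1 : θ < 1 := by linarith
  have hTP : (T : ℝ) * P ≤ P / A * D := by
    calc (T : ℝ) * P ≤ D / A * P := by gcongr
      _ = _ := by ring
  have hsq : D ^ 2 / (2 * A) = T * D - A * T ^ 2 / 2 + A * θ ^ 2 / 2 := by
    rw [hDA]; field_simp; ring
  have hθ2 : A * θ ^ 2 ≤ A * D := by
    have : θ ^ 2 ≤ D := by nlinarith
    gcongr
  have hT0 : 0 ≤ A * (T : ℝ) := by positivity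
  rw [hsq]
  nlinarith

/-- For every `ε > 0` there exists `D₀` such that for every `D ≥ D₀` and all pairwise
distinct positive integers `b₁, …, b_D`, one has
`∏_{i=1}^{D} b_i^{φ(b_i)} ≥ exp((½·ζ(6)/(ζ(2)ζ(3)) − ε)·D²·log D)`. -/
theorem prod_pow_totient_lower_bound (ε : ℝ) (hε : 0 < ε) :
    ∃ D₀ : ℕ, ∀ D : ℕ, D₀ ≤ D → ∀ b : Fin D → ℕ,
      Function.Injective b → (∀ i, 0 < b i) →
      Real.exp ((zetaR 6 / (2 * zetaR 2 * zetaR 3) - ε) * (D : ℝ) ^ 2 * Real.log D) ≤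
        ∏ i, (b i : ℝ) ^ (Nat.totient (b i)) := by
  set c := zetaR 6 / (2 * zetaR 2 * zetaR 3) with hc
  have hcB : c = 1 / (2 * totientDensity) := by
    have h2 := one_le_zetaR 2 (by norm_num)
    have h3 := one_le_zetaR 3 (by norm_num)
    have h6 := one_le_zetaR 6 (by norm_num)
    rw [hc, totientDensity]
    field_simp
  have hB0 := totientDensity_pos
  -- `A = (1 + δ) * totientDensity` and `δ → 0`
  have hlim : Filter.Tendsto (fun δ : ℝ => (1 - δ) * (1 / (2 * ((1 + δ) * totientDensity))))
      (nhdsWithin 0 (Set.Ioi 0)) (nhds c) := by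
    have : ContinuousAt (fun δ : ℝ => (1 - δ) * (1 / (2 * ((1 + δ) * totientDensity)))) 0 := by
      refine ContinuousAt.mul (by fun_prop) (ContinuousAt.div (by fun_prop) (by fun_prop) ?_)
      simp [hB0.ne']
    have h := this.tendsto
    simp only [sub_zero, add_zero, one_mul] at h
    rw [← hcB] at h
    exact h.mono_left nhdsWithin_le_nhds
  obtain ⟨δ, hδ, hδ1, hδ0⟩ := ((hlim.eventually_const_lt (show c - ε < c by linarith)).and
    (((eventually_lt_nhds (zero_lt_one' ℝ)).filter_mono nhdsWithin_le_nhds).and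
      self_mem_nhdsWithin)).exists
  have hδ0 : 0 < δ := hδ0
  set A := (1 + δ) * totientDensity with hA
  have hA1 : totientDensity < A := by nlinarith
  have hA0 : 0 < A := hB0.trans hA1
  obtain ⟨C, hC, hCS⟩ := exists_sum_totient_ge A hA1
  have hlim2 : Filter.Tendsto (fun D : ℕ => (1 - δ) *
      (1 / (2 * A) - (D : ℝ) ^ (-δ) / A - C / D)) Filter.atTop
      (nhds ((1 - δ) * (1 / (2 * A) - 0 / A - 0))) := by
    refine Filter.Tendsto.const_mul _ (Filter.Tendsto.sub (Filter.Tendsto.sub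
      tendsto_const_nhds (Filter.Tendsto.div_const ?_ _)) ?_)
    · exact (tendsto_rpow_neg_atTop hδ0).comp tendsto_natCast_atTop_atTop
    · exact tendsto_const_div_atTop_nhds_zero_nat C
  rw [zero_div, sub_zero, sub_zero] at hlim2
  obtain ⟨D₀, hD₀⟩ := Filter.eventually_atTop.1
    ((hlim2.eventually_const_lt hδ).and (Filter.eventually_ge_atTop 1))
  refine ⟨D₀, fun D hD b hb hpos => ?_⟩
  obtain ⟨hmain, hD1⟩ := hD₀ D hD
  have hDr : (1 : ℝ) ≤ D := by exact_mod_cast hD1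
  have hlog : 0 ≤ Real.log D := Real.log_nonneg hDr
  have hprod : ∏ i, (b i : ℝ) ^ (Nat.totient (b i)) =
      Real.exp (∑ i, (b i).totient * Real.log (b i)) := by
    rw [Real.exp_sum]
    refine prod_congr rfl fun i _ => ?_
    have : (0 : ℝ) < b i := by exact_mod_cast hpos i
    rw [mul_comm, Real.exp_mul, Real.exp_log this, Real.rpow_natCast]
  rw [hprod, Real.exp_le_exp]
  have himg : ∑ i, ((b i).totient : ℝ) * Real.log (b i) =
      ∑ n ∈ univ.image b, (n.totient : ℝ) * Real.log n :=
    (sum_image (f := fun n : ℕ => (n.totient : ℝ) * Real.log n) hb.injOn).symm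
  have hcard : #(univ.image b) = D := by
    rw [card_image_of_injective _ hb]; simp
  rw [himg]
  set S := univ.image b
  set m : ℝ := (D : ℝ) ^ (1 - δ) with hm
  have hm0 : 0 ≤ m := by positivity
  have hmD : m ≤ D := by
    calc m ≤ (D : ℝ) ^ (1 : ℝ) := Real.rpow_le_rpow_of_exponent_le hDr (by linarith)
      _ = D := Real.rpow_one _
  have hmeq : m = D * (D : ℝ) ^ (-δ) := by
    rw [hm, sub_eq_add_neg, Real.rpow_add (by linarith), Real.rpow_one]
  have hSpos : ∀ n ∈ S, 0 < n := fun n hn => by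
    obtain ⟨i, _, rfl⟩ := mem_image.1 hn
    exact hpos i
  -- discarding the at most `D^(1-δ)` elements below `D^(1-δ)` leaves `log n ≥ (1-δ) log D`
  set S' := S.filter fun n : ℕ => m < (n : ℝ) with hS'
  have hS'1 : (D : ℝ) - m ≤ #S' := by
    have h1 : #S' + #(S.filter fun n : ℕ => ¬ m < (n : ℝ)) = #S := card_filter_add_card_filter_not _
    have h2 : #(S.filter fun n : ℕ => ¬ m < (n : ℝ)) ≤ #(Ioc 0 ⌊m⌋₊) := by
      refine card_le_card fun n hn => ?_
      obtain ⟨h3, h4⟩ := mem_filter.1 hn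
      exact mem_Ioc.2 ⟨hSpos n h3, Nat.le_floor (not_lt.1 h4)⟩
    rw [Nat.card_Ioc, Nat.sub_zero] at h2
    have h3 : (#(S.filter fun n : ℕ => ¬ m < (n : ℝ)) : ℝ) ≤ m :=
      (Nat.cast_le.2 h2).trans (Nat.floor_le hm0)
    rw [hcard] at h1
    have h4 : (#S' : ℝ) + #(S.filter fun n : ℕ => ¬ m < (n : ℝ)) = D := by exact_mod_cast h1
    linarith
  have hS'2 : (#S' : ℝ) ≤ D := by
    rw [← hcard]; exact_mod_cast card_filter_le _ _
  have hsq : (D : ℝ) ^ 2 - 2 * D * m ≤ (#S' : ℝ) ^ 2 := by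
    have : ((D : ℝ) - m) ^ 2 ≤ (#S' : ℝ) ^ 2 :=
      pow_le_pow_left₀ (by linarith) hS'1 2
    nlinarith
  have hsum := hCS S' fun n hn => hSpos n (mem_filter.1 hn).1
  have hlow : (D : ℝ) ^ 2 * (1 / (2 * A) - (D : ℝ) ^ (-δ) / A - C / D) ≤
      ∑ n ∈ S', (n.totient : ℝ) := by
    refine le_trans ?_ hsum
    have h1 : (D : ℝ) ^ 2 * (1 / (2 * A) - (D : ℝ) ^ (-δ) / A - C / D) =
        ((D : ℝ) ^ 2 - 2 * D * m) / (2 * A) - C * D := by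
      rw [hmeq]
      field_simp
    rw [h1]
    gcongr
  calc (c - ε) * (D : ℝ) ^ 2 * Real.log D
      ≤ ((1 - δ) * (1 / (2 * A) - (D : ℝ) ^ (-δ) / A - C / D)) * (D : ℝ) ^ 2 * Real.log D := by
        gcongr
    _ = (D : ℝ) ^ 2 * (1 / (2 * A) - (D : ℝ) ^ (-δ) / A - C / D) *
        ((1 - δ) * Real.log D) := by ring
    _ ≤ (∑ n ∈ S', (n.totient : ℝ)) * ((1 - δ) * Real.log D) :=
        mul_le_mul_of_nonneg_right hlow (mul_nonneg (by linarith) hlog)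
    _ ≤ ∑ n ∈ S', (n.totient : ℝ) * Real.log n := by
      rw [sum_mul]
      refine sum_le_sum fun n hn => ?_
      have h1 : m < n := (mem_filter.1 hn).2
      have h2 : (1 - δ) * Real.log D ≤ Real.log n := by
        rw [← Real.log_rpow (by linarith)]
        exact Real.log_le_log (by positivity) h1.le
      gcongr
    _ ≤ _ := by
      refine sum_le_sum_of_subset_of_nonneg (filter_subset _ _) fun n hn _ => ?_
      have : (1 : ℝ) ≤ n := by exact_mod_cast hSpos n hn
      have := Real.log_nonneg this
      positivity
end
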